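/- Let n ≥ 1 and let θ be a fixed nonnegative bounded measurable function supported in Q = (-1/2,1/2)^n with ∫θ = 1. (i) If g is integrable with ∫_{ℝ^n} |g(x)|(1 + ln₊|g(x)| + ln₊|x|) dx < ∞, and f is integrable with |f| ≤ |g| almost everywhere and ∫ f dx = 0, then f belongs to H^1(ℝ^n). (ii) Conversely, let S be a set of integrable functions on ℝ^n that is closed under addition, contains θ, and has the property that every integrable f with ∫ f dx = 0 and |f| ≤ |g| almost everywhere for some g ∈ S belongs to H^1(ℝ^n); then every nonnegative g ∈ S satisfies ∫_{ℝ^n} g(x)(1 + ln₊ g(x) + ln₊|x|) dx < ∞. -/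

import Mathlib

open MeasureTheory Real Set Metric ENNReal

noncomputable section

/-- `ℝ^n` with the Euclidean norm. -/
abbrev En (n : ℕ) := EuclideanSpace ℝ (Fin n)

/-- `ln₊ t = max (ln t) 0`. -/
def lnp (t : ℝ) : ℝ := max (Real.log t) 0

/-- The unit cube `Q = (-1/2, 1/2)^n`. -/
def unitQ (n : ℕ) : Set (En n) := {x | ∀ i, -(1/2 : ℝ) < x i ∧ x i < 1/2}

/-- The dilate `φ_t(y) = t^{-n} φ(y/t)` convolved with `f` at `x`:
`(φ_t ∗ f)(x) = ∫ t^{-n} φ((x-y)/t) f(y) dy`. -/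
def phiConv (n : ℕ) (φ f : En n → ℝ) (t : ℝ) (x : En n) : ℝ :=
  ∫ y, (t ^ n)⁻¹ * φ (t⁻¹ • (x - y)) * f y

/-- The maximal function `𝓜_φ f(x) = sup_{t>0} |(φ_t ∗ f)(x)|`. -/
def Mphi (n : ℕ) (φ f : En n → ℝ) (x : En n) : ℝ :=
  ⨆ t : {t : ℝ // 0 < t}, |phiConv n φ f t.1 x|

/-- A smooth function supported in the closed unit ball with integral `1`. -/
def IsTestFun (n : ℕ) (φ : En n → ℝ) : Prop :=
  ContDiff ℝ (⊤ : ℕ∞) φ ∧ (∀ x, x ∉ Metric.closedBall (0 : En n) 1 → φ x = 0) ∧ (∫ x, φ x) = 1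

/-- Membership in the Hardy space `H^1(ℝ^n)`: the maximal function `𝓜_φ f` is
integrable for every admissible `φ`. -/
def MemH1 (n : ℕ) (f : En n → ℝ) : Prop :=
  ∀ φ : En n → ℝ, IsTestFun n φ → Integrable (Mphi n φ f)

open Filter Topology

lemma lnp_nonneg (t : ℝ) : 0 ≤ lnp t := le_max_right _ _

lemma lnp_zero : lnp 0 = 0 := by simp [lnp]

lemma lnp_mono {a b : ℝ} (ha : 0 ≤ a) (h : a ≤ b) : lnp a ≤ lnp b := by
  rcases ha.eq_or_lt with h0 | h0
  · rw [← h0, lnp_zero]; exact lnp_nonneg _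
  · exact max_le_max (Real.log_le_log h0 h) le_rfl

lemma lnp_mul_le {a b : ℝ} (ha : 0 ≤ a) (hb : 0 ≤ b) : lnp (a * b) ≤ lnp a + lnp b := by
  rcases ha.eq_or_lt with h0 | h0
  · rw [← h0, zero_mul, lnp_zero]; simpa using lnp_nonneg _
  rcases hb.eq_or_lt with h1 | h1
  · rw [← h1, mul_zero, lnp_zero]; simpa using lnp_nonneg _
  unfold lnp
  rw [Real.log_mul h0.ne' h1.ne']
  apply max_le
  · exact add_le_add (le_max_left _ _) (le_max_left _ _)
  · exact add_nonneg (le_max_right _ _) (le_max_right _ _)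

lemma lnp_pow_le {a : ℝ} (ha : 0 ≤ a) (k : ℕ) : lnp (a ^ k) ≤ k * lnp a := by
  induction k with
  | zero => simp [lnp]
  | succ k ih =>
    rw [pow_succ]
    refine (lnp_mul_le (pow_nonneg ha k) ha).trans ?_
    push_cast
    linarith

lemma lnp_measurable : Measurable lnp := by
  unfold lnp; fun_prop

lemma vol_closedBall (n : ℕ) (x : En n) {r : ℝ} (hr : 0 ≤ r) :
    volume (closedBall x r) = ENNReal.ofReal (r ^ n) * volume (closedBall (0 : En n) 1) := by
  have := Measure.addHaar_closedBall' (volume : Measure (En n)) x hr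
  simpa using this

lemma layer_aux (a : ℝ≥0∞) :
    ∫⁻ l in Ioi (0 : ℝ), (if ENNReal.ofReal l < a then 1 else 0) = a := by
  have : ∀ l : ℝ, (if ENNReal.ofReal l < a then (1 : ℝ≥0∞) else 0)
      = indicator {l : ℝ | ENNReal.ofReal l < a} 1 l := by
    intro l; simp [indicator]
  simp_rw [this]
  have hm : MeasurableSet {l : ℝ | ENNReal.ofReal l < a} :=
    measurableSet_lt ENNReal.measurable_ofReal measurable_const
  rw [lintegral_indicator_one hm, Measure.restrict_apply hm]
  rcases eq_or_ne a ⊤ with rfl | ha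
  · simp
  · have : {l : ℝ | ENNReal.ofReal l < a} ∩ Ioi 0 = Ioo 0 a.toReal := by
      ext l
      simp only [mem_inter_iff, mem_ofPred_eq, mem_Ioi, mem_Ioo]
      constructor
      · rintro ⟨h1, h2⟩
        exact ⟨h2, (ENNReal.ofReal_lt_iff_lt_toReal h2.le ha).1 h1⟩
      · rintro ⟨h1, h2⟩
        exact ⟨(ENNReal.ofReal_lt_iff_lt_toReal h1.le ha).2 h2, h1⟩
    rw [this]
    simp [ha]

lemma layer_cake {α : Type*} [MeasurableSpace α] (μ : Measure α) [SFinite μ] {F : α → ℝ≥0∞}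
    (hF : Measurable F) :
    ∫⁻ x, F x ∂μ = ∫⁻ l in Ioi (0 : ℝ), μ {x | ENNReal.ofReal l < F x} := by
  have h1 : ∀ l : ℝ, μ {x | ENNReal.ofReal l < F x}
      = ∫⁻ x, (if ENNReal.ofReal l < F x then 1 else 0) ∂μ := by
    intro l
    rw [← lintegral_indicator_one (measurableSet_lt measurable_const hF)]
    refine lintegral_congr fun x => ?_
    simp [indicator]
  simp_rw [h1]
  rw [lintegral_lintegral_swap]
  · exact lintegral_congr fun x => (layer_aux _).symm
  · apply Measurable.aemeasurable
    refine Measurable.ite ?_ measurable_const measurable_const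
    exact measurableSet_lt (by fun_prop) (by fun_prop)

lemma log_aux {a b : ℝ} (ha : 0 ≤ a) (hb : 0 < b) :
    ∫⁻ l in Ioi (0 : ℝ), (Ico b a).indicator (fun l => ENNReal.ofReal l⁻¹) l
      = ENNReal.ofReal (lnp (a / b)) := by
  rw [setLIntegral_indicator measurableSet_Ico]
  have : Ico b a ∩ Ioi 0 = Ico b a := by
    apply inter_eq_left.2
    intro x hx
    exact hb.trans_le hx.1
  rw [this]
  rcases le_or_gt a b with h | h
  · rw [Ico_eq_empty (not_lt.2 h)]
    have : lnp (a / b) = 0 := by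
      apply le_antisymm _ (lnp_nonneg _)
      refine (lnp_mono (by positivity) ((div_le_one hb).2 h)).trans ?_
      simp [lnp]
    simp [this]
  · rw [setLIntegral_congr Ico_ae_eq_Ioc]
    rw [← ofReal_integral_eq_lintegral_ofReal]
    · rw [← intervalIntegral.integral_of_le h.le, integral_inv_of_pos hb (hb.trans h)]
      congr 1
      unfold lnp
      rw [max_eq_left]
      exact Real.log_nonneg ((one_le_div hb).2 h.le)
    · rw [← IntegrableOn, ← intervalIntegrable_iff_integrableOn_Ioc_of_le h.le]
      apply intervalIntegrable_inv_iff.2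
      right
      rw [uIcc_of_le h.le]
      rintro ⟨h1, h2⟩
      linarith
    · refine (ae_restrict_iff' measurableSet_Ioc).2 (Eventually.of_forall ?_)
      intro x hx
      have : 0 < x := hb.trans hx.1
      simp; exact this.le

lemma polar (n : ℕ) (hn : 1 ≤ n) {F : ℝ → ℝ≥0∞} (hF : Measurable F) :
    ∫⁻ x : En n, F ‖x‖ = n * volume (ball (0 : En n) 1) *
      ∫⁻ r in Ioi (0 : ℝ), ENNReal.ofReal (r ^ (n - 1)) * F r := by
  have hfin : Module.finrank ℝ (En n) = n := by simp
  have : Nontrivial (En n) := by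
    apply Module.nontrivial_of_finrank_pos (R := ℝ)
    omega
  calc
    ∫⁻ x : En n, F ‖x‖ = ∫⁻ x : ({(0)}ᶜ : Set (En n)), F (‖x.1‖) ∂((volume : Measure (En n)).comap Subtype.val) := by
      rw [lintegral_subtype_comap (measurableSet_singleton _).compl fun x ↦ F (‖x‖),
        restrict_compl_singleton]
    _ = ∫⁻ x, F x.2 ∂(volume : Measure (En n)).toSphere.prod
          (.volumeIoiPow (Module.finrank ℝ (En n) - 1)) := by
      rw [← ((volume : Measure (En n)).measurePreserving_homeomorphUnitSphereProd).lintegral_comp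
        (by fun_prop)]
      simp
    _ = _ := by
      rw [lintegral_prod _ (by fun_prop)]
      simp only [lintegral_const, Measure.toSphere_apply_univ, hfin]
      rw [mul_comm]
      congr 1
      rw [Measure.volumeIoiPow, lintegral_withDensity_eq_lintegral_mul _ (by fun_prop) (by fun_prop)]
      exact lintegral_subtype_comap measurableSet_Ioi
        (fun r : ℝ => ENNReal.ofReal (r ^ (n - 1)) * F r)

lemma vitali (n : ℕ) (s : Set (En n)) (r : En n → ℝ) (R : ℝ) (hr0 : ∀ x ∈ s, 0 < r x)
    (hrR : ∀ x ∈ s, r x ≤ R) :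
    ∃ u ⊆ s, u.Countable ∧ (u.PairwiseDisjoint fun a => closedBall a (r a)) ∧
      s ⊆ ⋃ a ∈ u, closedBall a (5 * r a) := by
  obtain ⟨u, hus, hd, hc⟩ := Vitali.exists_disjoint_subfamily_covering_enlargement_closedBall
    s id r R hrR 5 (by norm_num)
  refine ⟨u, hus, ?_, hd, ?_⟩
  · apply hd.countable_of_nonempty_interior
    intro a ha
    refine ⟨a, ?_⟩
    exact ball_subset_interior_closedBall (mem_ball_self (hr0 a (hus ha)))
  · intro x hx
    obtain ⟨b, hb, h⟩ := hc x hx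
    simp only [mem_iUnion]
    exact ⟨b, hb, h (mem_closedBall_self (hr0 x hx).le)⟩

/-- The constant in the weak-type inequality. -/
def Cw (n : ℕ) : ℝ≥0∞ := ENNReal.ofReal (5 ^ n) * volume (closedBall (0 : En n) 1)

lemma vol1_ne_top (n : ℕ) : volume (closedBall (0 : En n) 1) ≠ ⊤ := measure_closedBall_lt_top.ne

lemma vol1_ne_zero (n : ℕ) : volume (closedBall (0 : En n) 1) ≠ 0 :=
  (measure_closedBall_pos _ _ one_pos).ne'

lemma Cw_ne_top (n : ℕ) : Cw n ≠ ⊤ := ENNReal.mul_ne_top ENNReal.ofReal_ne_top (vol1_ne_top n)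

lemma weak_type (n : ℕ) (hn : 1 ≤ n) (h : En n → ℝ≥0∞) (hfin : ∫⁻ y, h y ≠ ⊤) {l : ℝ} (hl : 0 < l)
    (s : Set (En n))
    (hs : ∀ x ∈ s, ∃ t : ℝ, 0 < t ∧ ENNReal.ofReal (l * t ^ n) ≤ ∫⁻ y in closedBall x t, h y) :
    ENNReal.ofReal l * volume s ≤ Cw n * ∫⁻ y, h y := by
  choose! r hr0 hr using hs
  have hb : ∀ x ∈ s, r x ≤ max 1 ((∫⁻ y, h y).toReal / l) := by
    intro x hx
    by_contra hcon
    push Not at hcon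
    have h1 : 1 < r x := (le_max_left _ _).trans_lt hcon
    have h2 : (∫⁻ y, h y).toReal / l < r x := (le_max_right _ _).trans_lt hcon
    have h3 : ENNReal.ofReal (l * r x ^ n) ≤ ∫⁻ y, h y :=
      (hr x hx).trans (setLIntegral_le_lintegral _ _)
    have h4 : l * r x ^ n ≤ (∫⁻ y, h y).toReal := (ENNReal.ofReal_le_iff_le_toReal hfin).1 h3
    have h5 : r x ≤ r x ^ n := le_self_pow₀ h1.le (by omega)
    rw [div_lt_iff₀ hl] at h2
    nlinarith
  obtain ⟨u, hus, hcount, hd, hc⟩ := vitali n s r _ hr0 hb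
  have hvol : ∀ a ∈ u, ENNReal.ofReal l * volume (closedBall a (5 * r a))
      ≤ Cw n * ∫⁻ y in closedBall a (r a), h y := by
    intro a ha
    have h0 := hr0 a (hus ha)
    rw [vol_closedBall n a (by positivity), mul_pow]
    have := hr a (hus ha)
    calc ENNReal.ofReal l * (ENNReal.ofReal (5 ^ n * r a ^ n) * volume (closedBall (0 : En n) 1))
        = Cw n * ENNReal.ofReal (l * r a ^ n) := by
          rw [ENNReal.ofReal_mul (by positivity), ENNReal.ofReal_mul hl.le, Cw]; ring
      _ ≤ _ := by gcongr
  have := hcount.to_subtype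
  calc ENNReal.ofReal l * volume s
      ≤ ENNReal.ofReal l * volume (⋃ a ∈ u, closedBall a (5 * r a)) := by gcongr
    _ ≤ ENNReal.ofReal l * ∑' a : u, volume (closedBall (a : En n) (5 * r a)) := by
        gcongr
        exact measure_biUnion_le _ hcount _
    _ = ∑' a : u, ENNReal.ofReal l * volume (closedBall (a : En n) (5 * r a)) := by
        rw [ENNReal.tsum_mul_left]
    _ ≤ ∑' a : u, Cw n * ∫⁻ y in closedBall (a : En n) (r a), h y :=
        ENNReal.tsum_le_tsum fun a => hvol a a.2
    _ = Cw n * ∑' a : u, ∫⁻ y in closedBall (a : En n) (r a), h y := by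
        rw [ENNReal.tsum_mul_left]
    _ = Cw n * ∫⁻ y in ⋃ a ∈ u, closedBall a (r a), h y := by
        rw [lintegral_biUnion hcount (fun a _ => measurableSet_closedBall) hd]
    _ ≤ _ := mul_le_mul_right (setLIntegral_le_lintegral _ _) _
lemma test_bound {n : ℕ} {φ : En n → ℝ} (hφ : IsTestFun n φ) :
    ∃ A : ℝ, 0 < A ∧ (∀ x, |φ x| ≤ A) ∧ ∀ a b, |φ a - φ b| ≤ A * ‖a - b‖ := by
  have hc : HasCompactSupport φ :=
    HasCompactSupport.intro (isCompact_closedBall (0 : En n) 1) hφ.2.1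
  obtain ⟨A, hA⟩ := hc.exists_bound_of_continuous hφ.1.continuous
  obtain ⟨B, hB⟩ := ContDiff.lipschitzWith_of_hasCompactSupport hc hφ.1 (by simp)
  refine ⟨max (max A B) 1, by positivity, fun x => ?_, fun a b => ?_⟩
  · exact (hA x).trans ((le_max_left _ _).trans (le_max_left _ _))
  · have := hB.dist_le_mul a b
    rw [Real.dist_eq, dist_eq_norm] at this
    refine this.trans ?_
    gcongr
    exact (le_max_right _ _).trans (le_max_left _ _)

lemma phiConv_cont_t {n : ℕ} {φ f : En n → ℝ} (hφ : IsTestFun n φ) (hf : Integrable f) (x : En n) :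
    ContinuousOn (fun t => phiConv n φ f t x) (Ioi 0) := by
  obtain ⟨A, hA0, hA, -⟩ := test_bound hφ
  have hφc := hφ.1.continuous
  intro t0 ht0
  have ht0' : (0 : ℝ) < t0 := ht0
  apply ContinuousAt.continuousWithinAt
  unfold phiConv
  apply continuousAt_of_dominated (bound := fun y => ((t0 / 2) ^ n)⁻¹ * A * |f y|)
  · refine Eventually.of_forall fun t => ?_
    refine AEStronglyMeasurable.mul ?_ hf.aestronglyMeasurable
    exact (by fun_prop : Continuous fun y => (t ^ n)⁻¹ * φ (t⁻¹ • (x - y))).aestronglyMeasurable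
  · have : ∀ᶠ t in 𝓝 t0, t0 / 2 < t := lt_mem_nhds (by linarith)
    filter_upwards [this] with t ht
    refine Eventually.of_forall fun y => ?_
    have ht' : 0 < t := by linarith
    rw [norm_mul, norm_mul, Real.norm_eq_abs, Real.norm_eq_abs, Real.norm_eq_abs,
      abs_of_pos (by positivity : 0 < (t ^ n)⁻¹)]
    gcongr
    exact hA _
  · exact hf.abs.const_mul _
  · refine Eventually.of_forall fun y => ?_
    have h1 : ContinuousAt (fun t : ℝ => (t ^ n)⁻¹) t0 :=
      ContinuousAt.inv₀ (by fun_prop) (by positivity)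
    have h2 : ContinuousAt (fun t : ℝ => t⁻¹) t0 := continuousAt_inv₀ ht0'.ne'
    have h3 : ContinuousAt (fun t : ℝ => φ (t⁻¹ • (x - y))) t0 :=
      ContinuousAt.comp (g := φ) hφc.continuousAt (h2.smul continuousAt_const)
    exact (h1.mul h3).mul continuousAt_const

lemma phiConv_cont_x {n : ℕ} {φ f : En n → ℝ} (hφ : IsTestFun n φ) (hf : Integrable f) (t : ℝ) :
    Continuous (fun x => phiConv n φ f t x) := by
  obtain ⟨A, hA0, hA, -⟩ := test_bound hφ
  have hφc := hφ.1.continuous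
  unfold phiConv
  apply continuous_of_dominated (bound := fun y => |(t ^ n)⁻¹| * A * |f y|)
  · intro x
    refine AEStronglyMeasurable.mul ?_ hf.aestronglyMeasurable
    exact (by fun_prop : Continuous fun y => (t ^ n)⁻¹ * φ (t⁻¹ • (x - y))).aestronglyMeasurable
  · intro x
    refine Eventually.of_forall fun y => ?_
    rw [norm_mul, norm_mul, Real.norm_eq_abs, Real.norm_eq_abs, Real.norm_eq_abs]
    gcongr
    exact hA _
  · exact hf.abs.const_mul _
  · refine Eventually.of_forall fun y => ?_
    fun_prop

lemma sup_rat {h : ℝ → ℝ} (hh : ContinuousOn h (Ioi 0)) :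
    (⨆ t : {t : ℝ // 0 < t}, h t.1) = ⨆ q : {q : ℚ // 0 < q}, h (q.1 : ℝ) := by
  have key : ∀ c, (∀ q : {q : ℚ // 0 < q}, h (q.1 : ℝ) ≤ c) → ∀ t : {t : ℝ // 0 < t}, h t.1 ≤ c := by
    intro c hc t
    by_contra hcon
    push Not at hcon
    have hcont : ContinuousAt h t.1 := hh.continuousAt (Ioi_mem_nhds t.2)
    have h1 : ∀ᶠ s in 𝓝 t.1, c < h s ∧ 0 < s :=
      (hcont.eventually (lt_mem_nhds hcon)).and (lt_mem_nhds t.2)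
    obtain ⟨U, hU, hUo, htU⟩ := _root_.eventually_nhds_iff.1 h1
    obtain ⟨q, hq⟩ := Rat.denseRange_cast.exists_mem_open hUo ⟨_, htU⟩
    have := hU _ hq
    have hq0 : 0 < q := by exact_mod_cast this.2
    exact absurd (hc ⟨q, hq0⟩) (not_le.2 this.1)
  have hne1 : Nonempty {t : ℝ // 0 < t} := ⟨⟨1, one_pos⟩⟩
  have hne2 : Nonempty {q : ℚ // 0 < q} := ⟨⟨1, one_pos⟩⟩
  have hsub : range (fun q : {q : ℚ // 0 < q} => h (q.1 : ℝ)) ⊆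
      range (fun t : {t : ℝ // 0 < t} => h t.1) := by
    rintro _ ⟨q, rfl⟩
    exact ⟨⟨q.1, by exact_mod_cast q.2⟩, rfl⟩
  by_cases hb : BddAbove (range fun t : {t : ℝ // 0 < t} => h t.1)
  · apply le_antisymm
    · exact ciSup_le (key _ fun q => le_ciSup (hb.mono hsub) q)
    · exact ciSup_le fun q => le_ciSup hb ⟨(q.1 : ℝ), by exact_mod_cast q.2⟩
  · have hb' : ¬ BddAbove (range (fun q : {q : ℚ // 0 < q} => h (q.1 : ℝ))) := by
      rintro ⟨c, hc⟩
      apply hb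
      refine ⟨c, ?_⟩
      rintro _ ⟨t, rfl⟩
      exact key c (fun q => hc ⟨q, rfl⟩) t
    rw [Real.iSup_of_not_bddAbove hb, Real.iSup_of_not_bddAbove hb']

lemma Mphi_rat {n : ℕ} {φ f : En n → ℝ} (hφ : IsTestFun n φ) (hf : Integrable f) (x : En n) :
    Mphi n φ f x = ⨆ q : {q : ℚ // 0 < q}, |phiConv n φ f (q.1 : ℝ) x| :=
  sup_rat (h := fun t => |phiConv n φ f t x|) (phiConv_cont_t hφ hf x).abs

lemma Mphi_measurable {n : ℕ} {φ f : En n → ℝ} (hφ : IsTestFun n φ) (hf : Integrable f) :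
    Measurable (Mphi n φ f) := by
  have : Mphi n φ f = fun x => ⨆ q : {q : ℚ // 0 < q}, |phiConv n φ f (q.1 : ℝ) x| :=
    funext (Mphi_rat hφ hf)
  rw [this]
  exact Measurable.iSup fun q => (phiConv_cont_x hφ hf _).abs.measurable

lemma Mphi_enorm_le {n : ℕ} {φ f : En n → ℝ} (hφ : IsTestFun n φ) (hf : Integrable f) (x : En n) :
    ‖Mphi n φ f x‖ₑ ≤ ⨆ q : {q : ℚ // 0 < q}, ‖phiConv n φ f (q.1 : ℝ) x‖ₑ := by
  have hne2 : Nonempty {q : ℚ // 0 < q} := ⟨⟨1, one_pos⟩⟩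
  rw [Mphi_rat hφ hf]
  have h0 : 0 ≤ ⨆ q : {q : ℚ // 0 < q}, |phiConv n φ f (q.1 : ℝ) x| :=
    Real.iSup_nonneg fun q => abs_nonneg _
  rw [Real.enorm_eq_ofReal h0]
  rcases eq_or_ne (⨆ q : {q : ℚ // 0 < q}, ‖phiConv n φ f (q.1 : ℝ) x‖ₑ) ⊤ with h | h
  · rw [h]; exact le_top
  · rw [ENNReal.ofReal_le_iff_le_toReal h]
    apply ciSup_le
    intro q
    rw [← ENNReal.ofReal_le_iff_le_toReal h, ← Real.enorm_eq_ofReal_abs]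
    exact le_iSup (fun q : {q : ℚ // 0 < q} => ‖phiConv n φ f (q.1 : ℝ) x‖ₑ) q

lemma phiConv_enorm_le {n : ℕ} {φ : En n → ℝ} (f : En n → ℝ) (hφ : IsTestFun n φ) {A : ℝ}
    (hA0 : 0 < A) (hA : ∀ x, |φ x| ≤ A) {t : ℝ} (ht : 0 < t) (x : En n) :
    ‖phiConv n φ f t x‖ₑ ≤
      ENNReal.ofReal A * (ENNReal.ofReal (t ^ n)⁻¹ * ∫⁻ y in closedBall x t, ‖f y‖ₑ) := by
  unfold phiConv
  refine (enorm_integral_le_lintegral_enorm _).trans ?_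
  rw [← lintegral_indicator measurableSet_closedBall, ← mul_assoc,
    ← ENNReal.ofReal_mul hA0.le, ← lintegral_const_mul' _ _ ENNReal.ofReal_ne_top]
  apply lintegral_mono
  intro y
  by_cases hy : y ∈ closedBall x t
  · simp only [indicator_of_mem hy]
    rw [enorm_mul]
    gcongr
    rw [Real.enorm_eq_ofReal_abs]
    apply ENNReal.ofReal_le_ofReal
    rw [abs_mul, abs_of_pos (by positivity : 0 < (t ^ n)⁻¹), mul_comm]
    gcongr
    exact hA _
  · have : φ (t⁻¹ • (x - y)) = 0 := by
      apply hφ.2.1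
      rw [mem_closedBall_zero_iff, norm_smul, norm_inv, Real.norm_eq_abs, abs_of_pos ht, not_le]
      rw [mem_closedBall, dist_comm, dist_eq_norm, not_le] at hy
      rw [inv_mul_eq_div, one_lt_div ht]
      exact hy
    simp [this]
/-- The local maximal function. -/
def Lloc (n : ℕ) (h : En n → ℝ≥0∞) (x : En n) : ℝ≥0∞ :=
  ⨆ q : {q : ℚ // 0 < q}, if (q.1 : ℝ) ≤ (1 + ‖x‖) / 2 then
    ENNReal.ofReal ((q.1 : ℝ) ^ n)⁻¹ * ∫⁻ y in closedBall x (q.1 : ℝ), h y else 0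

lemma ballint_measurable (n : ℕ) {h : En n → ℝ≥0∞} (hh : Measurable h) (q : ℝ) :
    Measurable fun x : En n => ∫⁻ y in closedBall x q, h y := by
  have : ∀ x : En n, ∫⁻ y in closedBall x q, h y
      = ∫⁻ y, (if dist y x ≤ q then h y else 0) := by
    intro x
    rw [← lintegral_indicator measurableSet_closedBall]
    refine lintegral_congr fun y => ?_
    simp [indicator]
  simp_rw [this]
  apply Measurable.lintegral_prod_right' (f := fun p : En n × En n =>
    if dist p.2 p.1 ≤ q then h p.2 else 0)
  refine Measurable.ite ?_ (by fun_prop) measurable_const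
  exact measurableSet_le (by fun_prop) (by fun_prop)

lemma Lloc_measurable (n : ℕ) {h : En n → ℝ≥0∞} (hh : Measurable h) : Measurable (Lloc n h) := by
  unfold Lloc
  refine Measurable.iSup fun q => ?_
  refine Measurable.ite ?_ ((ballint_measurable n hh _).const_mul _) measurable_const
  exact measurableSet_le (by fun_prop) (by fun_prop)

/-- The weight. -/
def Wt (n : ℕ) (x : En n) : ℝ := ((1 + ‖x‖) ^ (n + 1))⁻¹

lemma Wt_pos (n : ℕ) (x : En n) : 0 < Wt n x := by
  unfold Wt; positivity

lemma Wt_measurable (n : ℕ) : Measurable (Wt n) := by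
  unfold Wt; fun_prop

lemma Wt_lintegral (n : ℕ) : ∫⁻ x, ENNReal.ofReal (Wt n x) < ⊤ := by
  have h := integrable_one_add_norm (E := En n) (μ := volume) (r := (n + 1 : ℕ))
    (by simp)
  have h2 : Integrable (Wt n) := by
    refine h.congr (Eventually.of_forall fun x => ?_)
    unfold Wt
    simp only
    rw [Real.rpow_neg (by positivity), Real.rpow_natCast]
  rw [← ofReal_integral_eq_lintegral_ofReal h2
    (Eventually.of_forall fun x => (Wt_pos n x).le)]
  exact ENNReal.ofReal_lt_top

lemma lnp_one_add (s : ℝ) (hs : 0 ≤ s) : lnp (1 + s) ≤ lnp 2 + lnp s := by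
  rcases le_total s 1 with h | h
  · have := lnp_mono (by linarith : 0 ≤ 1 + s) (by linarith : 1 + s ≤ 2)
    linarith [lnp_nonneg s]
  · refine (lnp_mono (by linarith) (by linarith : 1 + s ≤ 2 * s)).trans ?_
    exact lnp_mul_le (by norm_num) hs

lemma log_weight_bound (n : ℕ) {κ : ℝ} (hκ : 0 < κ) : ∃ K : ℝ, 0 < K ∧ ∀ (a : ℝ) (y : En n), 0 ≤ a →
    lnp ((a / κ) / (Wt n y / 2 ^ (n + 1))) ≤ K * (1 + lnp a + lnp ‖y‖) := by
  refine ⟨1 + lnp (2 ^ (n + 1) / κ) + (n + 1) * (1 + lnp 2), ?_, ?_⟩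
  · have := lnp_nonneg (2 ^ (n + 1) / κ)
    have := lnp_nonneg 2
    positivity
  intro a y ha
  have h1 : (a / κ) / (Wt n y / 2 ^ (n + 1)) = a * (2 ^ (n + 1) / κ) * (1 + ‖y‖) ^ (n + 1) := by
    unfold Wt
    have : (0 : ℝ) < 1 + ‖y‖ := by positivity
    field_simp
  rw [h1]
  have h2 := lnp_mul_le (by positivity : 0 ≤ a * (2 ^ (n + 1) / κ))
    (by positivity : 0 ≤ (1 + ‖y‖) ^ (n + 1))
  have h3 := lnp_mul_le ha (by positivity : 0 ≤ 2 ^ (n + 1) / κ)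
  have h4 := lnp_pow_le (by positivity : 0 ≤ 1 + ‖y‖) (n + 1)
  have h5 := lnp_one_add ‖y‖ (norm_nonneg y)
  have p1 := lnp_nonneg (2 ^ (n + 1) / κ)
  have p2 := lnp_nonneg 2
  have p3 := lnp_nonneg a
  have p4 := lnp_nonneg ‖y‖
  push_cast at h4
  have hn0 : (0 : ℝ) ≤ n := n.cast_nonneg
  have h6 : ((n : ℝ) + 1) * lnp (1 + ‖y‖) ≤ (n + 1) * (lnp 2 + lnp ‖y‖) := by gcongr
  set c := lnp (2 ^ (n + 1) / κ)
  set d := lnp 2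
  set p := lnp a
  set q := lnp ‖y‖
  have e1 : 0 ≤ c * (p + q) := by positivity
  have e2 : 0 ≤ (n + 1) * d * (p + q) := by positivity
  have e3 : 0 ≤ (n : ℝ) * p := by positivity
  nlinarith

lemma Eset_bound (n : ℕ) (hn : 1 ≤ n) {u : En n → ℝ} (hu : Measurable u)
    (hfin : ∫⁻ x, ENNReal.ofReal (u x) ≠ ⊤) {κ : ℝ} (hκ : 0 < κ)
    (hκv : κ * (volume (closedBall (0 : En n) 1)).toReal = 1 / 2) {l : ℝ} (hl : 0 < l) :
    volume {x | ENNReal.ofReal l < Lloc n (fun y => ENNReal.ofReal (u y)) x ∧ Wt n x ≤ l} ≤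
      2 * Cw n * ∫⁻ y, ENNReal.ofReal (u y) *
        (Ico (Wt n y / 2 ^ (n + 1)) (u y / κ)).indicator (fun l => ENNReal.ofReal l⁻¹) l := by
  set D : Set (En n) := {y | l ∈ Ico (Wt n y / 2 ^ (n + 1)) (u y / κ)} with hD
  have hDm : MeasurableSet D := by
    have hW := Wt_measurable n
    have m1 : MeasurableSet {y : En n | Wt n y / 2 ^ (n + 1) ≤ l} :=
      measurableSet_le (by fun_prop) (by fun_prop)
    have m2 : MeasurableSet {y : En n | l < u y / κ} :=
      measurableSet_lt (by fun_prop) (by fun_prop)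
    exact m1.inter m2
  set h' : En n → ℝ≥0∞ := D.indicator (fun y => ENNReal.ofReal (u y)) with hh'
  have hle : ∀ y, h' y ≤ ENNReal.ofReal (u y) := fun y => indicator_le_self _ _ _
  have hfin' : ∫⁻ y, h' y ≠ ⊤ := ((lintegral_mono hle).trans_lt hfin.lt_top).ne
  have hw := weak_type n hn h' hfin' (half_pos hl)
    {x | ENNReal.ofReal l < Lloc n (fun y => ENNReal.ofReal (u y)) x ∧ Wt n x ≤ l} (by
      rintro x ⟨hx1, hx2⟩
      unfold Lloc at hx1
      obtain ⟨q, hq⟩ := lt_iSup_iff.1 hx1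
      have hq0 : (0 : ℝ) < q.1 := by exact_mod_cast q.2
      generalize (q.1 : ℝ) = t at hq hq0
      refine ⟨t, hq0, ?_⟩
      by_cases hqx : t ≤ (1 + ‖x‖) / 2
      swap
      · rw [if_neg hqx] at hq; exact absurd hq (by simp)
      rw [if_pos hqx] at hq
      have h1 : ENNReal.ofReal (l * t ^ n) ≤
          ∫⁻ y in closedBall x t, ENNReal.ofReal (u y) := by
        have htn : (0 : ℝ) < t ^ n := by positivity
        calc ENNReal.ofReal (l * t ^ n) = ENNReal.ofReal (t ^ n) * ENNReal.ofReal l := by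
              rw [mul_comm, ENNReal.ofReal_mul htn.le]
          _ ≤ ENNReal.ofReal (t ^ n) * (ENNReal.ofReal (t ^ n)⁻¹ *
              ∫⁻ y in closedBall x t, ENNReal.ofReal (u y)) := by gcongr
          _ = _ := by
              rw [← mul_assoc, ← ENNReal.ofReal_mul htn.le, mul_inv_cancel₀ htn.ne']
              simp
      have h2 : ∫⁻ y in closedBall x t, ENNReal.ofReal (u y) ≤
          ∫⁻ y in closedBall x t, (h' y + ENNReal.ofReal (κ * l)) := by
        apply setLIntegral_mono' measurableSet_closedBall
        intro y hy
        by_cases hyD : y ∈ D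
        · rw [hh', indicator_of_mem hyD]; exact le_self_add
        · rw [hh', indicator_of_notMem hyD, zero_add]
          apply ENNReal.ofReal_le_ofReal
          by_contra hcon
          push Not at hcon
          apply hyD
          refine ⟨?_, ?_⟩
          · have hyx : ‖x‖ - ‖y‖ ≤ t := by
              rw [mem_closedBall, dist_comm, dist_eq_norm] at hy
              exact (norm_sub_norm_le x y).trans hy
            have h3 : (1 + ‖x‖) ≤ 2 * (1 + ‖y‖) := by linarith
            refine le_trans ?_ hx2
            unfold Wt
            rw [div_eq_mul_inv, ← mul_inv]
            apply inv_anti₀ (by positivity)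
            rw [← mul_pow]
            apply pow_le_pow_left₀ (by positivity)
            linarith
          · rw [lt_div_iff₀ hκ]; linarith
      have h4 : ∫⁻ y in closedBall x t, (h' y + ENNReal.ofReal (κ * l)) =
          (∫⁻ y in closedBall x t, h' y) + ENNReal.ofReal (l / 2 * t ^ n) := by
        rw [lintegral_add_right _ measurable_const, setLIntegral_const,
          vol_closedBall n x hq0.le]
        congr 1
        rw [← ENNReal.ofReal_toReal (vol1_ne_top n), ← ENNReal.ofReal_mul (by positivity),
          ← ENNReal.ofReal_mul (by positivity)]
        congr 1
        linear_combination (l * t ^ n) * hκv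
      have h5 : ENNReal.ofReal (l * t ^ n) =
          ENNReal.ofReal (l / 2 * t ^ n) + ENNReal.ofReal (l / 2 * t ^ n) := by
        rw [← ENNReal.ofReal_add (by positivity) (by positivity)]
        congr 1; ring
      have h6 := h1.trans (h2.trans h4.le)
      rw [h5] at h6
      exact (ENNReal.add_le_add_iff_right ENNReal.ofReal_ne_top).1 h6)
  have e1 : ∀ y, ENNReal.ofReal (u y) *
        (Ico (Wt n y / 2 ^ (n + 1)) (u y / κ)).indicator (fun l => ENNReal.ofReal l⁻¹) l
        = h' y * ENNReal.ofReal l⁻¹ := by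
    intro y
    by_cases hyD : y ∈ D
    · rw [hh', indicator_of_mem hyD, indicator_of_mem (show l ∈ Ico _ _ from hyD)]
    · rw [hh', indicator_of_notMem hyD, indicator_of_notMem (show l ∉ Ico _ _ from hyD)]
      simp
  simp_rw [e1]
  rw [lintegral_mul_const' _ _ ENNReal.ofReal_ne_top]
  set V := volume {x | ENNReal.ofReal l < Lloc n (fun y => ENNReal.ofReal (u y)) x ∧ Wt n x ≤ l}
  have e2 : V = ENNReal.ofReal (2 * l⁻¹) * (ENNReal.ofReal (l / 2) * V) := by
    rw [← mul_assoc, ← ENNReal.ofReal_mul (by positivity)]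
    have : 2 * l⁻¹ * (l / 2) = 1 := by field_simp
    rw [this]; simp
  rw [e2]
  calc _ ≤ ENNReal.ofReal (2 * l⁻¹) * (Cw n * ∫⁻ y, h' y) := by gcongr
    _ = _ := by
      rw [ENNReal.ofReal_mul (by norm_num)]
      simp only [ENNReal.ofReal_ofNat]
      ring

lemma Lloc_lintegral (n : ℕ) (hn : 1 ≤ n) {u : En n → ℝ} (hu : Measurable u) (hu0 : ∀ x, 0 ≤ u x)
    (hfin : ∫⁻ x, ENNReal.ofReal (u x) ≠ ⊤)
    (hlog : ∫⁻ x, ENNReal.ofReal (u x * (1 + lnp (u x) + lnp ‖x‖)) < ⊤) :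
    ∫⁻ x, Lloc n (fun y => ENNReal.ofReal (u y)) x < ⊤ := by
  have hv0 : 0 < (volume (closedBall (0 : En n) 1)).toReal :=
    ENNReal.toReal_pos (vol1_ne_zero n) (vol1_ne_top n)
  set v := (volume (closedBall (0 : En n) 1)).toReal with hv
  set κ := 1 / (2 * v) with hκd
  have hκ : 0 < κ := by positivity
  have hκv : κ * v = 1 / 2 := by rw [hκd]; field_simp
  obtain ⟨K, hK0, hK⟩ := log_weight_bound n hκ
  have hW := Wt_measurable n
  rw [layer_cake volume (Lloc_measurable n (by fun_prop))]
  have hsplit : ∀ l ∈ Ioi (0 : ℝ),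
      volume {x | ENNReal.ofReal l < Lloc n (fun y => ENNReal.ofReal (u y)) x} ≤
      volume {x | ENNReal.ofReal l < ENNReal.ofReal (Wt n x)} +
      2 * Cw n * ∫⁻ y, ENNReal.ofReal (u y) *
        (Ico (Wt n y / 2 ^ (n + 1)) (u y / κ)).indicator (fun l => ENNReal.ofReal l⁻¹) l := by
    intro l hl
    refine le_trans ?_ (add_le_add le_rfl (Eset_bound n hn hu hfin hκ hκv hl))
    refine le_trans (measure_mono ?_) (measure_union_le _ _)
    intro x hx
    by_cases h : Wt n x ≤ l
    · exact Or.inr ⟨hx, h⟩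
    · left
      push Not at h
      exact (ENNReal.ofReal_lt_ofReal_iff (Wt_pos n x)).2 h
  have hmeas : Measurable (Function.uncurry fun (l : ℝ) (y : En n) => ENNReal.ofReal (u y) *
        (Ico (Wt n y / 2 ^ (n + 1)) (u y / κ)).indicator (fun l => ENNReal.ofReal l⁻¹) l) := by
    have : (Function.uncurry fun (l : ℝ) (y : En n) => ENNReal.ofReal (u y) *
        (Ico (Wt n y / 2 ^ (n + 1)) (u y / κ)).indicator (fun l => ENNReal.ofReal l⁻¹) l)
        = fun p : ℝ × En n => ENNReal.ofReal (u p.2) *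
          ({p : ℝ × En n | Wt n p.2 / 2 ^ (n + 1) ≤ p.1 ∧ p.1 < u p.2 / κ}.indicator
            (fun p => ENNReal.ofReal p.1⁻¹) p) := by
      funext p
      simp [Function.uncurry, indicator]
    rw [this]
    refine Measurable.mul (by fun_prop) (Measurable.indicator (by fun_prop) ?_)
    have m1 : MeasurableSet {p : ℝ × En n | Wt n p.2 / 2 ^ (n + 1) ≤ p.1} :=
      measurableSet_le (by fun_prop) (by fun_prop)
    have m2 : MeasurableSet {p : ℝ × En n | p.1 < u p.2 / κ} :=
      measurableSet_lt (by fun_prop) (by fun_prop)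
    exact m1.inter m2
  refine (setLIntegral_mono' measurableSet_Ioi hsplit).trans_lt ?_
  rw [lintegral_add_right _ (hmeas.lintegral_prod_right.const_mul _),
    ← layer_cake volume (by fun_prop)]
  refine ENNReal.add_lt_top.2 ⟨Wt_lintegral n, ?_⟩
  have hC : 2 * Cw n ≠ ⊤ := ENNReal.mul_ne_top (by simp) (Cw_ne_top n)
  rw [lintegral_const_mul' _ _ hC, lintegral_lintegral_swap hmeas.aemeasurable]
  refine ENNReal.mul_lt_top hC.lt_top ?_
  refine lt_of_le_of_lt (lintegral_mono
    (g := fun y => ENNReal.ofReal K * ENNReal.ofReal (u y * (1 + lnp (u y) + lnp ‖y‖))) ?_) ?_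
  · intro y
    simp only
    rw [lintegral_const_mul' _ _ ENNReal.ofReal_ne_top,
      log_aux (div_nonneg (hu0 y) hκ.le) (div_pos (Wt_pos n y) (by positivity)),
      ← ENNReal.ofReal_mul (hu0 y), ← ENNReal.ofReal_mul hK0.le]
    apply ENNReal.ofReal_le_ofReal
    calc _ ≤ u y * (K * (1 + lnp (u y) + lnp ‖y‖)) :=
          mul_le_mul_of_nonneg_left (hK (u y) y (hu0 y)) (hu0 y)
      _ = _ := by ring
  · rw [lintegral_const_mul' _ _ ENNReal.ofReal_ne_top]
    exact ENNReal.mul_lt_top ENNReal.ofReal_lt_top hlog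
/-- The kernel for large scales. -/
def hker (n : ℕ) (x y : En n) : ℝ≥0∞ :=
  ENNReal.ofReal (((1 + ‖x‖) ^ n)⁻¹ * min 1 (‖y‖ / (1 + ‖x‖)))

lemma ker_measurable (n : ℕ) : Measurable (fun p : En n × En n => hker n p.1 p.2) := by
  unfold hker; fun_prop

lemma tail_aux {a : ℝ} (ha : 0 < a) :
    ∫⁻ r in Ioi a, ENNReal.ofReal (a * r ^ (-2 : ℝ)) = 1 := by
  rw [← ofReal_integral_eq_lintegral_ofReal]
  · rw [integral_const_mul, integral_Ioi_rpow_of_lt (by norm_num) ha]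
    have : a * (-a ^ (-2 + 1 : ℝ) / (-2 + 1)) = 1 := by
      have : (-2 + 1 : ℝ) = -1 := by norm_num
      rw [this, Real.rpow_neg_one]
      field_simp
    rw [this]; simp
  · exact (integrableOn_Ioi_rpow_of_lt (by norm_num) ha).const_mul a
  · refine (ae_restrict_iff' measurableSet_Ioi).2 (Eventually.of_forall ?_)
    intro x hx
    have : 0 < x := ha.trans hx
    simp only [Pi.zero_apply]
    positivity

lemma ker_lintegral (n : ℕ) (hn : 1 ≤ n) (y : En n) :
    ∫⁻ x, hker n x y ≤ n * volume (ball (0 : En n) 1) * ENNReal.ofReal (2 + lnp ‖y‖) := by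
  rcases (norm_nonneg y).eq_or_lt with h0 | ha
  · have : ∀ x, hker n x y = 0 := by
      intro x
      unfold hker
      simp [← h0]
    simp [this]
  set a := ‖y‖ with hay
  set F : ℝ → ℝ≥0∞ := fun r => ENNReal.ofReal (((1 + r) ^ n)⁻¹ * min 1 (a / (1 + r))) with hF
  have hFm : Measurable F := by rw [hF]; fun_prop
  have h1 : ∫⁻ x, hker n x y = ∫⁻ x : En n, F ‖x‖ := rfl
  rw [h1, polar n hn hFm]
  gcongr
  have hpt : ∀ r ∈ Ioi (0 : ℝ), ENNReal.ofReal (r ^ (n - 1)) * F r ≤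
      (Ioc (0 : ℝ) 1).indicator 1 r + ((Ico 1 a).indicator (fun l => ENNReal.ofReal l⁻¹) r
      + (Ici a).indicator (fun r => ENNReal.ofReal (a * r ^ (-2 : ℝ))) r) := by
    intro r hr
    have hr0 : 0 < r := hr
    have hb : ENNReal.ofReal (r ^ (n - 1)) * F r ≤
        ENNReal.ofReal ((1 + r)⁻¹ * min 1 (a / (1 + r))) := by
      rw [hF, ← ENNReal.ofReal_mul (by positivity)]
      apply ENNReal.ofReal_le_ofReal
      rw [← mul_assoc]
      apply mul_le_mul_of_nonneg_right _ (by positivity)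
      obtain ⟨m, rfl⟩ : ∃ m, n = m + 1 := ⟨n - 1, by omega⟩
      simp only [Nat.add_sub_cancel]
      rw [pow_succ, mul_inv, ← mul_assoc]
      have : r ^ m * ((1 + r) ^ m)⁻¹ ≤ 1 := by
        rw [← div_eq_mul_inv, div_le_one (by positivity)]
        exact pow_le_pow_left₀ hr0.le (by linarith) m
      exact mul_le_of_le_one_left (by positivity) this
    refine hb.trans ?_
    have hinv : (1 + r)⁻¹ ≤ r⁻¹ := inv_anti₀ hr0 (by linarith)
    rcases le_or_gt r 1 with hr1 | hr1
    · refine le_trans ?_ le_self_add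
      rw [indicator_of_mem (show r ∈ Ioc (0 : ℝ) 1 from ⟨hr0, hr1⟩)]
      simp only [Pi.one_apply]
      rw [← ENNReal.ofReal_one]
      apply ENNReal.ofReal_le_ofReal
      exact mul_le_one₀ (inv_le_one_of_one_le₀ (by linarith)) (by positivity) (min_le_left _ _)
    refine le_trans ?_ le_add_self
    rcases lt_or_ge r a with hra | hra
    · refine le_trans ?_ le_self_add
      rw [indicator_of_mem (show r ∈ Ico 1 a from ⟨hr1.le, hra⟩)]
      apply ENNReal.ofReal_le_ofReal
      exact (mul_le_of_le_one_right (by positivity) (min_le_left _ _)).trans hinv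
    · refine le_trans ?_ le_add_self
      rw [indicator_of_mem (show r ∈ Ici a from hra)]
      apply ENNReal.ofReal_le_ofReal
      have e : r ^ (-2 : ℝ) = r⁻¹ * r⁻¹ := by
        rw [Real.rpow_neg hr0.le]
        norm_num
        ring
      rw [e]
      calc (1 + r)⁻¹ * min 1 (a / (1 + r)) ≤ r⁻¹ * (a * r⁻¹) := by
            refine mul_le_mul hinv ((min_le_right _ _).trans ?_) (by positivity) (by positivity)
            rw [div_eq_mul_inv]
            exact mul_le_mul_of_nonneg_left hinv ha.le
        _ = _ := by ring
  refine (setLIntegral_mono' measurableSet_Ioi hpt).trans ?_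
  rw [lintegral_add_left (measurable_one.indicator measurableSet_Ioc),
    lintegral_add_left (Measurable.indicator (by fun_prop) measurableSet_Ico),
    log_aux ha.le one_pos, div_one]
  have i1 : ∫⁻ r in Ioi (0 : ℝ), (Ioc (0 : ℝ) 1).indicator 1 r ≤ 1 := by
    rw [lintegral_indicator_one measurableSet_Ioc, Measure.restrict_apply measurableSet_Ioc]
    refine (measure_mono inter_subset_left).trans ?_
    simp
  have i2 : ∫⁻ r in Ioi (0 : ℝ), (Ici a).indicator (fun r => ENNReal.ofReal (a * r ^ (-2 : ℝ))) r
      ≤ 1 := by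
    rw [setLIntegral_indicator measurableSet_Ici]
    refine (lintegral_mono_set inter_subset_left).trans ?_
    rw [setLIntegral_congr Ioi_ae_eq_Ici.symm, tail_aux ha]
  calc _ ≤ 1 + (ENNReal.ofReal (lnp a) + 1) := add_le_add i1 (add_le_add le_rfl i2)
    _ = _ := by
      rw [ENNReal.ofReal_add (by norm_num) (lnp_nonneg _)]
      simp only [ENNReal.ofReal_ofNat]
      rw [add_comm (ENNReal.ofReal _), ← add_assoc, one_add_one_eq_two]

lemma far_bound {n : ℕ} {φ f : En n → ℝ} (hφ : IsTestFun n φ) (hf : Integrable f)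
    (hf0 : ∫ x, f x = 0) {A : ℝ} (hA0 : 0 < A) (hA : ∀ x, |φ x| ≤ A)
    (hL : ∀ a b, |φ a - φ b| ≤ A * ‖a - b‖) {t : ℝ} (x : En n) (ht : (1 + ‖x‖) / 2 < t) :
    ‖phiConv n φ f t x‖ₑ ≤ ENNReal.ofReal (A * 4 * 2 ^ n) * ∫⁻ y, hker n x y * ‖f y‖ₑ := by
  have hx0 : 0 < 1 + ‖x‖ := by positivity
  have ht0 : 0 < t := by linarith
  have hφc := hφ.1.continuous
  have e1 : phiConv n φ f t x
      = ∫ y, (t ^ n)⁻¹ * (φ (t⁻¹ • (x - y)) - φ (t⁻¹ • x)) * f y := by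
    unfold phiConv
    have hi : Integrable (fun y => (t ^ n)⁻¹ * φ (t⁻¹ • (x - y)) * f y) := by
      refine hf.bdd_mul (c := (t ^ n)⁻¹ * A) ?_ ?_
      · exact (by fun_prop : Continuous fun y => (t ^ n)⁻¹ * φ (t⁻¹ • (x - y))).aestronglyMeasurable
      · refine Eventually.of_forall fun y => ?_
        rw [norm_mul, Real.norm_eq_abs, Real.norm_eq_abs, abs_of_pos (by positivity)]
        gcongr
        exact hA _
    have : ∫ y, (t ^ n)⁻¹ * φ (t⁻¹ • x) * f y = 0 := by
      rw [integral_const_mul, hf0, mul_zero]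
    rw [← sub_zero (∫ y, (t ^ n)⁻¹ * φ (t⁻¹ • (x - y)) * f y), ← this,
      ← integral_sub hi (hf.const_mul _)]
    congr 1
    funext y
    ring
  rw [e1]
  refine (enorm_integral_le_lintegral_enorm _).trans ?_
  rw [← lintegral_const_mul' _ _ ENNReal.ofReal_ne_top]
  apply lintegral_mono
  intro y
  simp only
  rw [enorm_mul, ← mul_assoc]
  gcongr
  rw [Real.enorm_eq_ofReal_abs, hker, ← ENNReal.ofReal_mul (by positivity)]
  apply ENNReal.ofReal_le_ofReal
  rw [abs_mul, abs_of_pos (by positivity : 0 < (t ^ n)⁻¹)]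
  have b1 : (t ^ n)⁻¹ ≤ 2 ^ n * ((1 + ‖x‖) ^ n)⁻¹ := by
    rw [← div_eq_mul_inv, ← one_div, div_le_div_iff₀ (by positivity) (by positivity), one_mul,
      ← mul_pow]
    apply pow_le_pow_left₀ hx0.le
    linarith
  have b2 : |φ (t⁻¹ • (x - y)) - φ (t⁻¹ • x)| ≤ A * 4 * min 1 (‖y‖ / (1 + ‖x‖)) := by
    rw [mul_min_of_nonneg _ _ (by positivity)]
    apply le_min
    · have := abs_sub (φ (t⁻¹ • (x - y))) (φ (t⁻¹ • x))
      linarith [hA (t⁻¹ • (x - y)), hA (t⁻¹ • x)]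
    · refine (hL _ _).trans ?_
      have : t⁻¹ • (x - y) - t⁻¹ • x = - (t⁻¹ • y) := by
        rw [smul_sub]; abel
      rw [this, norm_neg, norm_smul, norm_inv, Real.norm_eq_abs, abs_of_pos ht0, mul_assoc]
      apply mul_le_mul_of_nonneg_left _ hA0.le
      rw [inv_mul_eq_div, ← mul_div_assoc, div_le_div_iff₀ ht0 hx0]
      nlinarith [norm_nonneg y]
  calc _ ≤ (2 ^ n * ((1 + ‖x‖) ^ n)⁻¹) * (A * 4 * min 1 (‖y‖ / (1 + ‖x‖))) :=
        mul_le_mul b1 b2 (abs_nonneg _) (by positivity)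
    _ = _ := by ring

lemma part_one (n : ℕ) (hn : 1 ≤ n) (g f : En n → ℝ)
    (hglog : ∫⁻ x, ENNReal.ofReal (|g x| * (1 + lnp |g x| + lnp ‖x‖)) < ⊤)
    (hf : Integrable f) (hfg : ∀ᵐ x ∂(volume : Measure (En n)), |f x| ≤ |g x|)
    (hf0 : (∫ x, f x) = 0) : MemH1 n f := by
  intro φ hφ
  obtain ⟨A, hA0, hA, hL⟩ := test_bound hφ
  refine ⟨(Mphi_measurable hφ hf).aestronglyMeasurable, ?_⟩
  set u : En n → ℝ := fun y => |hf.aestronglyMeasurable.mk f y| with hu_def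
  have hum : Measurable u := (hf.aestronglyMeasurable.stronglyMeasurable_mk.measurable).abs
  have huf : ∀ᵐ y, u y = |f y| := by
    filter_upwards [hf.aestronglyMeasurable.ae_eq_mk] with y hy
    rw [hu_def, hy]
  have hu0 : ∀ y, 0 ≤ u y := fun y => abs_nonneg _
  have hue : ∀ᵐ y, ‖f y‖ₑ = ENNReal.ofReal (u y) := by
    filter_upwards [huf] with y hy
    rw [hy, Real.enorm_eq_ofReal_abs]
  have hulog : ∫⁻ x, ENNReal.ofReal (u x * (1 + lnp (u x) + lnp ‖x‖)) < ⊤ := by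
    refine lt_of_le_of_lt (lintegral_mono_ae ?_) hglog
    filter_upwards [huf, hfg] with y h1 h2
    apply ENNReal.ofReal_le_ofReal
    rw [h1]
    have := lnp_mono (abs_nonneg _) h2
    have p1 := lnp_nonneg |f y|
    have p2 := lnp_nonneg ‖y‖
    gcongr
  have hufin : ∫⁻ x, ENNReal.ofReal (u x) ≠ ⊤ := by
    rw [← lintegral_congr_ae hue]
    exact hf.2.ne
  have hLl := Lloc_lintegral n hn hum hu0 hufin hulog
  have hmeask : Measurable (Function.uncurry fun (x y : En n) => hker n x y * ENNReal.ofReal (u y)) :=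
    (ker_measurable n).mul (by fun_prop)
  have hbound : ∀ x, ‖Mphi n φ f x‖ₑ ≤
      ENNReal.ofReal A * Lloc n (fun y => ENNReal.ofReal (u y)) x +
      ENNReal.ofReal (A * 4 * 2 ^ n) * ∫⁻ y, hker n x y * ENNReal.ofReal (u y) := by
    intro x
    refine (Mphi_enorm_le hφ hf x).trans (iSup_le fun q => ?_)
    have hq0 : (0 : ℝ) < q.1 := by exact_mod_cast q.2
    by_cases hq : (q.1 : ℝ) ≤ (1 + ‖x‖) / 2
    · refine le_trans ?_ le_self_add
      refine (phiConv_enorm_le f hφ hA0 hA hq0 x).trans ?_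
      gcongr
      rw [lintegral_congr_ae (ae_restrict_of_ae hue)]
      unfold Lloc
      refine le_trans ?_ (le_iSup _ q)
      rw [if_pos hq]
    · push Not at hq
      refine le_trans ?_ le_add_self
      refine (far_bound hφ hf hf0 hA0 hA hL x hq).trans ?_
      apply le_of_eq
      congr 1
      apply lintegral_congr_ae
      filter_upwards [hue] with y hy
      rw [hy]
  unfold HasFiniteIntegral
  refine (lintegral_mono hbound).trans_lt ?_
  rw [lintegral_add_left ((Lloc_measurable n (by fun_prop)).const_mul _),
    lintegral_const_mul' _ _ ENNReal.ofReal_ne_top, lintegral_const_mul' _ _ ENNReal.ofReal_ne_top]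
  refine ENNReal.add_lt_top.2 ⟨ENNReal.mul_lt_top ENNReal.ofReal_lt_top hLl,
    ENNReal.mul_lt_top ENNReal.ofReal_lt_top ?_⟩
  rw [lintegral_lintegral_swap hmeask.aemeasurable]
  have hC : (n : ℝ≥0∞) * volume (ball (0 : En n) 1) * 2 ≠ ⊤ :=
    ENNReal.mul_ne_top (ENNReal.mul_ne_top (by simp) measure_ball_lt_top.ne) (by simp)
  refine lt_of_le_of_lt (lintegral_mono (g := fun y => (n : ℝ≥0∞) * volume (ball (0 : En n) 1) * 2 *
    ENNReal.ofReal (u y * (1 + lnp (u y) + lnp ‖y‖))) ?_) ?_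
  · intro y
    simp only
    rw [lintegral_mul_const' _ _ ENNReal.ofReal_ne_top]
    refine (mul_le_mul_left (ker_lintegral n hn y) _).trans ?_
    rw [mul_assoc, ← ENNReal.ofReal_mul (by linarith [lnp_nonneg ‖y‖]), mul_assoc _ 2]
    gcongr
    have e2 : ∀ c : ℝ, (2 : ℝ≥0∞) * ENNReal.ofReal c = ENNReal.ofReal (2 * c) := by
      intro c
      rw [ENNReal.ofReal_mul (by norm_num), ENNReal.ofReal_ofNat]
    rw [e2]
    apply ENNReal.ofReal_le_ofReal
    have p1 := mul_nonneg (hu0 y) (lnp_nonneg (u y))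
    have p2 := mul_nonneg (hu0 y) (lnp_nonneg ‖y‖)
    nlinarith
  · rw [lintegral_const_mul' _ _ hC]
    exact ENNReal.mul_lt_top hC.lt_top hulog
lemma exists_bump (n : ℕ) : ∃ (φ : En n → ℝ) (a : ℝ), IsTestFun n φ ∧ (∀ x, 0 ≤ φ x) ∧ 0 < a ∧
    (∀ x, φ x ≤ a) ∧ ∀ x, ‖x‖ ≤ 1 / 2 → φ x = a := by
  let b : ContDiffBump (0 : En n) := ⟨1 / 2, 1, by norm_num, by norm_num⟩
  have hpos : 0 < ∫ x, b x := b.integral_pos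
  refine ⟨b.normed volume, 1 / ∫ x, b x, ⟨b.contDiff_normed, ?_, b.integral_normed⟩,
    fun x => b.nonneg_normed x, by positivity, ?_, ?_⟩
  · intro x hx
    by_contra hcon
    have : x ∈ Function.support (b.normed volume) := hcon
    rw [b.support_normed_eq] at this
    exact hx (ball_subset_closedBall this)
  · intro x
    rw [b.normed_def]
    gcongr
    exact b.le_one
  · intro x hx
    rw [b.normed_def, b.one_of_mem_closedBall]
    rw [mem_closedBall_zero_iff]
    exact hx

lemma phiConv_integrable {n : ℕ} {φ f : En n → ℝ} (hφ : IsTestFun n φ) (hf : Integrable f) (t : ℝ)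
    (x : En n) : Integrable (fun y => (t ^ n)⁻¹ * φ (t⁻¹ • (x - y)) * f y) := by
  obtain ⟨A, hA0, hA, -⟩ := test_bound hφ
  have hφc := hφ.1.continuous
  refine hf.bdd_mul (c := |(t ^ n)⁻¹| * A) ?_ ?_
  · exact (by fun_prop : Continuous fun y => (t ^ n)⁻¹ * φ (t⁻¹ • (x - y))).aestronglyMeasurable
  · refine Eventually.of_forall fun y => ?_
    rw [norm_mul, Real.norm_eq_abs, Real.norm_eq_abs]
    gcongr
    exact hA _

lemma Mphi_ge {n : ℕ} (hn : 1 ≤ n) {φ f : En n → ℝ} (hφ : IsTestFun n φ) (hf : Integrable f) :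
    ∀ᵐ x, ∀ t : ℝ, 0 < t → |phiConv n φ f t x| ≤ Mphi n φ f x := by
  obtain ⟨A, hA0, hA, -⟩ := test_bound hφ
  set Z : Set (En n) := {x | ¬ BddAbove (range fun t : {t : ℝ // 0 < t} => |phiConv n φ f t.1 x|)}
    with hZ
  have hfin : ∫⁻ y, ‖f y‖ₑ ≠ ⊤ := hf.2.ne
  have key : ∀ N : ℝ, 0 < N → ENNReal.ofReal N * volume Z ≤ Cw n * ∫⁻ y, ‖f y‖ₑ := by
    intro N hN
    apply weak_type n hn _ hfin hN
    intro x hx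
    have hx' : ¬ BddAbove (range fun t : {t : ℝ // 0 < t} => |phiConv n φ f t.1 x|) := hx
    rw [not_bddAbove_iff] at hx'
    obtain ⟨_, ⟨t, rfl⟩, ht⟩ := hx' (A * N)
    have ht0 := t.2
    refine ⟨t.1, ht0, ?_⟩
    have h1 := phiConv_enorm_le f hφ hA0 hA ht0 x
    rw [Real.enorm_eq_ofReal_abs] at h1
    have h2 : ENNReal.ofReal (A * N) ≤ _ := (ENNReal.ofReal_le_ofReal ht.le).trans h1
    rw [← mul_assoc, ← ENNReal.ofReal_mul hA0.le] at h2
    have hp : 0 < t.1 ^ n := by positivity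
    calc ENNReal.ofReal (N * t.1 ^ n)
        = ENNReal.ofReal (t.1 ^ n / A) * ENNReal.ofReal (A * N) := by
          rw [← ENNReal.ofReal_mul (by positivity)]
          congr 1; field_simp
      _ ≤ ENNReal.ofReal (t.1 ^ n / A) * (ENNReal.ofReal (A * (t.1 ^ n)⁻¹) *
            ∫⁻ y in closedBall x t.1, ‖f y‖ₑ) := by gcongr
      _ = _ := by
          rw [← mul_assoc, ← ENNReal.ofReal_mul (by positivity)]
          have : t.1 ^ n / A * (A * (t.1 ^ n)⁻¹) = 1 := by field_simp
          rw [this]; simp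
  have hZ0 : volume Z = 0 := by
    by_contra hne
    have hM : Cw n * ∫⁻ y, ‖f y‖ₑ ≠ ⊤ := ENNReal.mul_ne_top (Cw_ne_top n) hfin
    obtain ⟨k, hk⟩ := ENNReal.exists_nat_mul_gt hne hM
    rcases Nat.eq_zero_or_pos k with rfl | hk0
    · simp at hk
    · have := key k (by exact_mod_cast hk0)
      rw [ENNReal.ofReal_natCast] at this
      exact absurd hk (not_lt.2 this)
  have : ∀ᵐ x, x ∉ Z := measure_eq_zero_iff_ae_notMem.1 hZ0
  filter_upwards [this] with x hx t ht
  have hb : BddAbove (range fun t : {t : ℝ // 0 < t} => |phiConv n φ f t.1 x|) := by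
    by_contra hcon
    exact hx hcon
  exact le_ciSup hb ⟨t, ht⟩

lemma reverse_weak (n : ℕ) {h : En n → ℝ≥0∞} (hh : Measurable h) (hfin : ∫⁻ y, h y ≠ ⊤)
    {l : ℝ≥0∞}
    (hl : ∫⁻ y, h y ≤ l * volume (closedBall (0 : En n) (1 / 4))) (T : Set (En n))
    (hT : ∀ x r, 0 < r → l * volume (closedBall x r) ≤ ∫⁻ y in closedBall x r, h y →
      closedBall x r ⊆ T) :
    ∫⁻ y in {y | l < h y}, h y ≤ ENNReal.ofReal (5 ^ n) * (l * volume T) := by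
  set ρ : ℕ → ℝ := fun k => (1 / 4) * (1 / 5) ^ k with hρ
  have hρ0 : ∀ k, 0 < ρ k := fun k => by rw [hρ]; positivity
  have hρlim : Tendsto ρ atTop (𝓝[>] 0) := by
    apply tendsto_nhdsWithin_of_tendsto_nhds_of_eventually_within
    · have := (tendsto_pow_atTop_nhds_zero_of_lt_one (by norm_num : (0 : ℝ) ≤ 1 / 5)
        (by norm_num)).const_mul (1 / 4 : ℝ)
      rw [mul_zero] at this
      exact this
    · exact Eventually.of_forall hρ0
  have hdiff := (Besicovitch.vitaliFamily (volume : Measure (En n))).ae_tendsto_lintegral_div'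
    hh hfin
  have hlim : ∀ᵐ x, Tendsto (fun k => (∫⁻ y in closedBall x (ρ k), h y) /
      volume (closedBall x (ρ k))) atTop (𝓝 (h x)) := by
    filter_upwards [hdiff] with x hx
    exact hx.comp ((Besicovitch.tendsto_filterAt volume x).comp hρlim)
  set s : Set (En n) := {x | l < h x ∧ Tendsto (fun k => (∫⁻ y in closedBall x (ρ k), h y) /
      volume (closedBall x (ρ k))) atTop (𝓝 (h x))} with hs
  have hex : ∀ x ∈ s, ∃ r : ℝ, (0 < r ∧ r ≤ 1 / 4) ∧
      l * volume (closedBall x r) ≤ (∫⁻ y in closedBall x r, h y) ∧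
      (∫⁻ y in closedBall x (5 * r), h y) ≤ l * volume (closedBall x (5 * r)) := by
    rintro x ⟨hx1, hx2⟩
    have hex1 : ∃ k, l * volume (closedBall x (ρ k)) < ∫⁻ y in closedBall x (ρ k), h y := by
      obtain ⟨k, hk⟩ := (hx2.eventually (lt_mem_nhds hx1)).exists
      refine ⟨k, ?_⟩
      exact (ENNReal.lt_div_iff_mul_lt (Or.inl (measure_closedBall_pos _ _ (hρ0 k)).ne')
        (Or.inl measure_closedBall_lt_top.ne)).1 hk
    classical
    have hk := Nat.find_spec hex1
    have hmin := fun m => @Nat.find_min _ _ hex1 m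
    set k := Nat.find hex1
    have hk0 : k ≠ 0 := by
      intro h0
      rw [h0] at hk
      apply absurd hk
      rw [not_lt]
      refine (setLIntegral_le_lintegral _ _).trans ?_
      have e : ρ 0 = 1 / 4 := by simp [hρ]
      rw [e, Measure.addHaar_closedBall_center]
      exact hl
    refine ⟨ρ k, ⟨hρ0 k, ?_⟩, hk.le, ?_⟩
    · rw [hρ]
      have : ((1 : ℝ) / 5) ^ k ≤ 1 := pow_le_one₀ (by norm_num) (by norm_num)
      simp only
      linarith
    · obtain ⟨m, hm⟩ := Nat.exists_eq_succ_of_ne_zero hk0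
      have e : 5 * ρ k = ρ m := by
        rw [hρ, hm]; simp only [Nat.succ_eq_add_one, pow_succ]; ring
      rw [e]
      exact not_lt.1 (hmin m (by omega))
  choose! r hr0 hr1 hr2 using hex
  obtain ⟨u, hus, hcount, hd, hc⟩ := vitali n s r (1 / 4) (fun x hx => (hr0 x hx).1)
    (fun x hx => (hr0 x hx).2)
  have hcov : ({y | l < h y} : Set (En n)) ≤ᵐ[volume] ⋃ a ∈ u, closedBall a (5 * r a) := by
    filter_upwards [hlim] with x hx hx2
    exact hc ⟨hx2, hx⟩
  have := hcount.to_subtype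
  calc ∫⁻ y in {y | l < h y}, h y ≤ ∫⁻ y in ⋃ a ∈ u, closedBall a (5 * r a), h y :=
        lintegral_mono' (Measure.restrict_mono' hcov le_rfl) le_rfl
    _ = ∫⁻ y in ⋃ a : u, closedBall (a : En n) (5 * r a), h y := by rw [biUnion_eq_iUnion]
    _ ≤ ∑' a : u, ∫⁻ y in closedBall (a : En n) (5 * r a), h y := lintegral_iUnion_le _ _
    _ ≤ ∑' a : u, ENNReal.ofReal (5 ^ n) * (l * volume (closedBall (a : En n) (r a))) := by
        refine ENNReal.tsum_le_tsum fun a => ?_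
        have ha := hr0 a (hus a.2)
        refine (hr2 a (hus a.2)).trans (le_of_eq ?_)
        rw [vol_closedBall n _ (by linarith : 0 ≤ 5 * r a), vol_closedBall n _ ha.1.le, mul_pow,
          ENNReal.ofReal_mul (by positivity)]
        ring
    _ = ENNReal.ofReal (5 ^ n) * (l * ∑' a : u, volume (closedBall (a : En n) (r a))) := by
        rw [ENNReal.tsum_mul_left, ENNReal.tsum_mul_left]
    _ = ENNReal.ofReal (5 ^ n) * (l * volume (⋃ a ∈ u, closedBall a (r a))) := by
        rw [measure_biUnion hcount hd (fun a _ => measurableSet_closedBall)]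
    _ ≤ _ := by
        gcongr
        apply iUnion₂_subset
        intro a ha
        exact hT a (r a) (hr0 a (hus ha)).1 (hr1 a (hus ha))
lemma unitQ_norm (n : ℕ) (hn : 1 ≤ n) {x : En n} (hx : x ∈ unitQ n) : ‖x‖ < n := by
  have h1 : ‖x‖ ^ 2 ≤ n * (1 / 4) := by
    rw [EuclideanSpace.norm_sq_eq]
    calc ∑ i, ‖x i‖ ^ 2 ≤ ∑ i : Fin n, (1 / 4 : ℝ) := by
          apply Finset.sum_le_sum
          intro i _
          rw [Real.norm_eq_abs, sq_abs]
          have := hx i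
          nlinarith [this.1, this.2]
      _ = _ := by simp
  have h2 : (1 : ℝ) ≤ n := by exact_mod_cast hn
  nlinarith [norm_nonneg x]

lemma far_lower (n : ℕ) {φ : En n → ℝ} {a : ℝ} (hφ : IsTestFun n φ) (ha : 0 < a)
    (hφa : ∀ x, φ x ≤ a) (hφ1 : ∀ x, ‖x‖ ≤ 1 / 2 → φ x = a)
    {f u : En n → ℝ} (hf : Integrable f) (hf0 : ∫ x, f x = 0) (hu0 : ∀ x, 0 ≤ u x)
    {R : ℝ} (hR : 0 < R) (hfu : ∀ᵐ y, R < ‖y‖ → f y = u y) (x : En n) (hx : R ≤ ‖x‖) :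
    ENNReal.ofReal (a * ((4 * ‖x‖) ^ n)⁻¹) *
      (∫⁻ y, if 5 * ‖x‖ < ‖y‖ then ENNReal.ofReal (u y) else 0)
      ≤ ‖phiConv n φ f (4 * ‖x‖) x‖ₑ := by
  have hx0 : 0 < ‖x‖ := hR.trans_le hx
  set t := 4 * ‖x‖ with ht
  have ht0 : 0 < t := by positivity
  have hi := phiConv_integrable hφ hf t x
  have hi2 : Integrable (fun y => (t ^ n)⁻¹ * a * f y) := hf.const_mul _
  set G : En n → ℝ := fun y => (t ^ n)⁻¹ * a * f y - (t ^ n)⁻¹ * φ (t⁻¹ • (x - y)) * f y with hG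
  have hGi : Integrable G := hi2.sub hi
  have hGe : ∫ y, G y = - phiConv n φ f t x := by
    rw [hG, integral_sub hi2 hi, integral_const_mul, hf0]
    simp [phiConv]
  have hG1 : ∀ᵐ y, 0 ≤ G y := by
    filter_upwards [hfu] with y hy
    have e : G y = (t ^ n)⁻¹ * (a - φ (t⁻¹ • (x - y))) * f y := by rw [hG]; ring
    rw [e]
    rcases le_or_gt ‖y‖ ‖x‖ with h | h
    · have : φ (t⁻¹ • (x - y)) = a := by
        apply hφ1
        rw [norm_smul, norm_inv, Real.norm_eq_abs, abs_of_pos ht0, inv_mul_eq_div,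
          div_le_div_iff₀ ht0 (by norm_num)]
        have := norm_sub_le x y
        linarith
      simp [this]
    · rw [hy (hx.trans_lt h)]
      have := hφa (t⁻¹ • (x - y))
      have h3 : 0 ≤ a - φ (t⁻¹ • (x - y)) := by linarith
      have := hu0 y
      positivity
  have hG2 : ∀ᵐ y, ENNReal.ofReal (a * (t ^ n)⁻¹) *
      (if 5 * ‖x‖ < ‖y‖ then ENNReal.ofReal (u y) else 0) ≤ ENNReal.ofReal (G y) := by
    filter_upwards [hfu] with y hy
    by_cases h : 5 * ‖x‖ < ‖y‖
    · rw [if_pos h, ← ENNReal.ofReal_mul (by positivity)]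
      apply ENNReal.ofReal_le_ofReal
      have : φ (t⁻¹ • (x - y)) = 0 := by
        apply hφ.2.1
        rw [mem_closedBall_zero_iff, norm_smul, norm_inv, Real.norm_eq_abs, abs_of_pos ht0, not_le,
          inv_mul_eq_div, one_lt_div ht0, ← norm_neg, neg_sub]
        have := norm_sub_norm_le y x
        linarith
      rw [hG]
      simp only [this]
      rw [hy (by linarith)]
      apply le_of_eq
      ring
    · rw [if_neg h]; simp
  rw [← lintegral_const_mul' _ _ ENNReal.ofReal_ne_top]
  refine (lintegral_mono_ae hG2).trans ?_
  rw [← ofReal_integral_eq_lintegral_ofReal hGi hG1, hGe, Real.enorm_eq_ofReal_abs]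
  exact ENNReal.ofReal_le_ofReal (neg_le_abs _)

lemma far_part (n : ℕ) (hn : 1 ≤ n) {φ : En n → ℝ} {a : ℝ} (hφ : IsTestFun n φ) (ha : 0 < a)
    (hφa : ∀ x, φ x ≤ a) (hφ1 : ∀ x, ‖x‖ ≤ 1 / 2 → φ x = a)
    {f u : En n → ℝ} (hf : Integrable f) (hf0 : ∫ x, f x = 0) (hu : Measurable u)
    (hu0 : ∀ x, 0 ≤ u x)
    {R : ℝ} (hR : 0 < R) (hfu : ∀ᵐ y, R < ‖y‖ → f y = u y)
    (hM : ∫⁻ x, ‖Mphi n φ f x‖ₑ < ⊤) :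
    ∫⁻ y, ENNReal.ofReal (u y) * ENNReal.ofReal (lnp (‖y‖ / 5 / R)) < ⊤ := by
  have hn0 : (0 : ℝ) < n := by exact_mod_cast hn
  set J : En n → En n → ℝ≥0∞ := fun x y => ENNReal.ofReal (u y) *
    (Ico R (‖y‖ / 5)).indicator (fun r => ENNReal.ofReal (r ^ n)⁻¹) ‖x‖ with hJ
  have hJm : Measurable (Function.uncurry J) := by
    have : Function.uncurry J = fun p : En n × En n => ENNReal.ofReal (u p.2) *
        ({p : En n × En n | R ≤ ‖p.1‖ ∧ ‖p.1‖ < ‖p.2‖ / 5}.indicator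
          (fun p => ENNReal.ofReal (‖p.1‖ ^ n)⁻¹) p) := by
      funext p
      simp [Function.uncurry, indicator, hJ]
    rw [this]
    refine Measurable.mul (by fun_prop) (Measurable.indicator (by fun_prop) ?_)
    have m1 : MeasurableSet {p : En n × En n | R ≤ ‖p.1‖} :=
      measurableSet_le (by fun_prop) (by fun_prop)
    have m2 : MeasurableSet {p : En n × En n | ‖p.1‖ < ‖p.2‖ / 5} :=
      measurableSet_lt (by fun_prop) (by fun_prop)
    exact m1.inter m2
  -- the integral in `x`
  have hx : ∀ y, ∫⁻ x, J x y = n * volume (ball (0 : En n) 1) *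
      (ENNReal.ofReal (u y) * ENNReal.ofReal (lnp (‖y‖ / 5 / R))) := by
    intro y
    rw [hJ]
    simp only
    rw [lintegral_const_mul' _ _ ENNReal.ofReal_ne_top,
      polar n hn (Measurable.indicator (by fun_prop) measurableSet_Ico),
      ← log_aux (by positivity) hR]
    have : ∀ r ∈ Ioi (0 : ℝ), ENNReal.ofReal (r ^ (n - 1)) *
        (Ico R (‖y‖ / 5)).indicator (fun r => ENNReal.ofReal (r ^ n)⁻¹) r
        = (Ico R (‖y‖ / 5)).indicator (fun l => ENNReal.ofReal l⁻¹) r := by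
      intro r hr
      have hr0 : (0 : ℝ) < r := hr
      by_cases h : r ∈ Ico R (‖y‖ / 5)
      · rw [indicator_of_mem h, indicator_of_mem h, ← ENNReal.ofReal_mul (by positivity)]
        congr 1
        obtain ⟨m, rfl⟩ : ∃ m, n = m + 1 := ⟨n - 1, by omega⟩
        simp only [Nat.add_sub_cancel]
        field_simp
        ring
      · rw [indicator_of_notMem h, indicator_of_notMem h, mul_zero]
    rw [setLIntegral_congr_fun measurableSet_Ioi this]
    ring
  have hy : ∀ᵐ x, ∫⁻ y, J x y ≤ ENNReal.ofReal (4 ^ n / a) * ‖Mphi n φ f x‖ₑ := by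
    filter_upwards [Mphi_ge hn hφ hf] with x hxM
    by_cases hxR : R ≤ ‖x‖
    · have hx0 : 0 < ‖x‖ := hR.trans_le hxR
      have h1 := far_lower n hφ ha hφa hφ1 hf hf0 hu0 hR hfu x hxR
      have h2 : ‖phiConv n φ f (4 * ‖x‖) x‖ₑ ≤ ‖Mphi n φ f x‖ₑ := by
        have h3 := hxM (4 * ‖x‖) (by positivity)
        rw [Real.enorm_eq_ofReal_abs, Real.enorm_eq_ofReal_abs]
        exact ENNReal.ofReal_le_ofReal (h3.trans (le_abs_self _))
      have h4 : ∫⁻ y, J x y = ENNReal.ofReal (4 ^ n / a) * (ENNReal.ofReal (a * ((4 * ‖x‖) ^ n)⁻¹) *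
          (∫⁻ y, if 5 * ‖x‖ < ‖y‖ then ENNReal.ofReal (u y) else 0)) := by
        rw [← mul_assoc, ← ENNReal.ofReal_mul (by positivity),
          ← lintegral_const_mul' _ _ ENNReal.ofReal_ne_top]
        refine lintegral_congr fun y => ?_
        rw [hJ]
        have e : 4 ^ n / a * (a * ((4 * ‖x‖) ^ n)⁻¹) = (‖x‖ ^ n)⁻¹ := by
          rw [mul_pow]; field_simp
        rw [e]
        by_cases h : 5 * ‖x‖ < ‖y‖
        · rw [if_pos h]
          simp only
          rw [indicator_of_mem (show ‖x‖ ∈ Ico R (‖y‖ / 5) from ⟨hxR, by linarith⟩), mul_comm]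
        · rw [if_neg h]
          simp only
          rw [indicator_of_notMem (fun hmem : ‖x‖ ∈ Ico R (‖y‖ / 5) => h (by linarith [hmem.2]))]
          simp
      rw [h4]
      gcongr
      exact h1.trans h2
    · have : ∀ y, J x y = 0 := by
        intro y
        rw [hJ]
        simp only
        rw [indicator_of_notMem (fun hmem : ‖x‖ ∈ Ico R (‖y‖ / 5) => hxR hmem.1), mul_zero]
      simp [this]
  have hsw : ∫⁻ y, ∫⁻ x, J x y < ⊤ := by
    rw [← lintegral_lintegral_swap hJm.aemeasurable]
    refine (lintegral_mono_ae hy).trans_lt ?_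
    rw [lintegral_const_mul' _ _ ENNReal.ofReal_ne_top]
    exact ENNReal.mul_lt_top ENNReal.ofReal_lt_top hM
  simp_rw [hx] at hsw
  have hC : (n : ℝ≥0∞) * volume (ball (0 : En n) 1) ≠ ⊤ :=
    ENNReal.mul_ne_top (by simp) measure_ball_lt_top.ne
  have hC0 : (n : ℝ≥0∞) * volume (ball (0 : En n) 1) ≠ 0 :=
    mul_ne_zero (by simp; omega) (measure_ball_pos _ _ one_pos).ne'
  rw [lintegral_const_mul' _ _ hC] at hsw
  by_contra hcon
  rw [not_lt, top_le_iff] at hcon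
  rw [hcon, ENNReal.mul_top hC0] at hsw
  exact absurd hsw (lt_irrefl _)

lemma near_lower (n : ℕ) {φ : En n → ℝ} {a : ℝ} (hφ : IsTestFun n φ) (hφ0 : ∀ x, 0 ≤ φ x)
    (ha : 0 < a) (hφa : ∀ x, φ x ≤ a) (hφ1 : ∀ x, ‖x‖ ≤ 1 / 2 → φ x = a)
    {g θ u : En n → ℝ} (hg : Integrable g) (hθ : Integrable θ) (hu0 : ∀ x, 0 ≤ u x)
    (hgu : ∀ᵐ y, u y = g y) {c C : ℝ} (hc : 0 ≤ c) (hC0 : 0 ≤ C) (hθC : ∀ x, |θ x| ≤ C)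
    {v : ℝ} (hv : v = (volume (closedBall (0 : En n) 1)).toReal)
    {l : ℝ} (hl : c * (a * (C * v)) ≤ a * v / (2 * 4 ^ n) * l) (hl0 : 0 < l)
    {x z : En n} {r : ℝ} (hr : 0 < r) (hz : z ∈ closedBall x r)
    (hx : ENNReal.ofReal l * volume (closedBall x r) ≤
      ∫⁻ y in closedBall x r, ENNReal.ofReal (u y)) :
    a * v / (2 * 4 ^ n) * l ≤ phiConv n φ (fun y => g y - c * θ y) (4 * r) z := by
  have hv0 : 0 ≤ v := by rw [hv]; exact ENNReal.toReal_nonneg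
  have hvv : volume (closedBall (0 : En n) 1) = ENNReal.ofReal v := by
    rw [hv, ENNReal.ofReal_toReal (vol1_ne_top n)]
  set t := 4 * r with ht
  have ht0 : 0 < t := by positivity
  have hi1 := phiConv_integrable hφ hg t z
  have hi2 := phiConv_integrable hφ hθ t z
  have hlin : phiConv n φ (fun y => g y - c * θ y) t z
      = phiConv n φ g t z - c * phiConv n φ θ t z := by
    unfold phiConv
    rw [← integral_const_mul, ← integral_sub hi1 (hi2.const_mul c)]
    congr 1
    funext y
    ring
  have hφA : ∀ x, |φ x| ≤ a := fun x => by rw [abs_of_nonneg (hφ0 x)]; exact hφa x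
  have hth : phiConv n φ θ t z ≤ a * (C * v) := by
    refine (le_abs_self _).trans ?_
    rw [← ENNReal.ofReal_le_ofReal_iff (by positivity), ← Real.enorm_eq_ofReal_abs]
    refine (phiConv_enorm_le θ hφ ha hφA ht0 z).trans ?_
    rw [ENNReal.ofReal_mul ha.le]
    gcongr
    calc ENNReal.ofReal (t ^ n)⁻¹ * ∫⁻ y in closedBall z t, ‖θ y‖ₑ
        ≤ ENNReal.ofReal (t ^ n)⁻¹ * ∫⁻ y in closedBall z t, ENNReal.ofReal C := by
          gcongr with y
          rw [Real.enorm_eq_ofReal_abs]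
          exact ENNReal.ofReal_le_ofReal (hθC y)
      _ = ENNReal.ofReal (C * v) := by
          rw [setLIntegral_const, vol_closedBall n z ht0.le, hvv,
            ← ENNReal.ofReal_mul (by positivity), ← ENNReal.ofReal_mul (by positivity),
            ← ENNReal.ofReal_mul (by positivity)]
          congr 1
          field_simp
  have hg0 : ∀ᵐ y, 0 ≤ (t ^ n)⁻¹ * φ (t⁻¹ • (z - y)) * g y := by
    filter_upwards [hgu] with y hy
    rw [← hy]
    have := hφ0 (t⁻¹ • (z - y))
    have := hu0 y
    positivity
  have hgl : a * v / 4 ^ n * l ≤ phiConv n φ g t z := by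
    have hnn : 0 ≤ phiConv n φ g t z := integral_nonneg_of_ae hg0
    rw [← ENNReal.ofReal_le_ofReal_iff hnn]
    unfold phiConv
    rw [ofReal_integral_eq_lintegral_ofReal hi1 hg0]
    calc ENNReal.ofReal (a * v / 4 ^ n * l)
        = ENNReal.ofReal ((t ^ n)⁻¹ * a) * (ENNReal.ofReal l * volume (closedBall x r)) := by
          rw [vol_closedBall n x hr.le, hvv,
            ← ENNReal.ofReal_mul (by positivity), ← ENNReal.ofReal_mul (by positivity),
            ← ENNReal.ofReal_mul (by positivity)]
          congr 1
          rw [ht, mul_pow]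
          field_simp
      _ ≤ ENNReal.ofReal ((t ^ n)⁻¹ * a) * ∫⁻ y in closedBall x r, ENNReal.ofReal (u y) := by
          gcongr
      _ = ∫⁻ y in closedBall x r, ENNReal.ofReal ((t ^ n)⁻¹ * a) * ENNReal.ofReal (u y) := by
          rw [lintegral_const_mul' _ _ ENNReal.ofReal_ne_top]
      _ ≤ ∫⁻ y in closedBall x r, ENNReal.ofReal ((t ^ n)⁻¹ * φ (t⁻¹ • (z - y)) * g y) := by
          apply lintegral_mono_ae
          filter_upwards [ae_restrict_of_ae hgu, ae_restrict_mem measurableSet_closedBall] with y h1 h2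
          rw [← ENNReal.ofReal_mul (by positivity), h1]
          apply le_of_eq
          congr 3
          symm
          apply hφ1
          rw [norm_smul, norm_inv, Real.norm_eq_abs, abs_of_pos ht0, inv_mul_eq_div,
            div_le_div_iff₀ ht0 (by norm_num), ← dist_eq_norm]
          have d1 := mem_closedBall.1 hz
          have d2 := mem_closedBall.1 h2
          have d3 := dist_triangle_right z y x
          linarith
      _ ≤ _ := setLIntegral_le_lintegral _ _
  rw [hlin]
  have h1 : c * phiConv n φ θ t z ≤ c * (a * (C * v)) := by gcongr
  have h2 : a * v / 4 ^ n * l = 2 * (a * v / (2 * 4 ^ n) * l) := by field_simp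
  linarith

lemma near_part (n : ℕ) (hn : 1 ≤ n) {φ : En n → ℝ} {a : ℝ} (hφ : IsTestFun n φ)
    (hφ0 : ∀ x, 0 ≤ φ x)
    (ha : 0 < a) (hφa : ∀ x, φ x ≤ a) (hφ1 : ∀ x, ‖x‖ ≤ 1 / 2 → φ x = a)
    {g θ u : En n → ℝ} (hg : Integrable g) (hθ : Integrable θ) (hu : Measurable u)
    (hu0 : ∀ x, 0 ≤ u x)
    (hgu : ∀ᵐ y, u y = g y) {c C : ℝ} (hc : 0 ≤ c) (hC0 : 0 ≤ C) (hθC : ∀ x, |θ x| ≤ C)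
    (hufin : ∫⁻ y, ENNReal.ofReal (u y) ≠ ⊤)
    (hM : ∫⁻ x, ‖Mphi n φ (fun y => g y - c * θ y) x‖ₑ < ⊤) :
    ∃ b : ℝ, 0 < b ∧ ∫⁻ y, ENNReal.ofReal (u y) * ENNReal.ofReal (lnp (u y / b)) < ⊤ := by
  set f : En n → ℝ := fun y => g y - c * θ y with hfdef
  have hf : Integrable f := hg.sub (hθ.const_mul c)
  set v : ℝ := (volume (closedBall (0 : En n) 1)).toReal with hv
  have hv0 : 0 < v := ENNReal.toReal_pos (vol1_ne_zero n) (vol1_ne_top n)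
  have hvv : volume (closedBall (0 : En n) 1) = ENNReal.ofReal v := by
    rw [hv, ENNReal.ofReal_toReal (vol1_ne_top n)]
  set k : ℝ := a * v / (2 * 4 ^ n) with hk
  have hk0 : 0 < k := by positivity
  set I : ℝ := (∫⁻ y, ENNReal.ofReal (u y)).toReal with hI
  have hIe : ∫⁻ y, ENNReal.ofReal (u y) = ENNReal.ofReal I := by
    rw [hI, ENNReal.ofReal_toReal hufin]
  set b : ℝ := max 1 (max (c * (a * (C * v)) / k) (I / ((1 / 4) ^ n * v))) with hb
  have hb0 : 0 < b := lt_of_lt_of_le one_pos (le_max_left _ _)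
  have hb1 : c * (a * (C * v)) / k ≤ b := (le_max_left _ _).trans (le_max_right _ _)
  have hb2 : I / ((1 / 4) ^ n * v) ≤ b := (le_max_right _ _).trans (le_max_right _ _)
  refine ⟨b, hb0, ?_⟩
  set P : En n → ℝ≥0∞ := fun x => ENNReal.ofReal (2 / k) * ‖Mphi n φ f x‖ₑ with hP
  have hPm : Measurable P := (Mphi_measurable hφ hf).enorm.const_mul _
  set Z : Set (En n) := {x | ¬ ∀ t : ℝ, 0 < t → |phiConv n φ f t x| ≤ Mphi n φ f x} with hZ
  have hZ0 : volume Z = 0 := Mphi_ge hn hφ hf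
  have key : ∀ l : ℝ, b ≤ l →
      ∫⁻ y in {y | ENNReal.ofReal l < ENNReal.ofReal (u y)}, ENNReal.ofReal (u y)
      ≤ ENNReal.ofReal (5 ^ n) * (ENNReal.ofReal l * volume {x | ENNReal.ofReal l < P x}) := by
    intro l hbl
    have hl0 : 0 < l := hb0.trans_le hbl
    have h1 := reverse_weak n (h := fun y => ENNReal.ofReal (u y)) (by fun_prop) hufin
      (l := ENNReal.ofReal l) ?_ ({x | ENNReal.ofReal l < P x} ∪ Z) ?_
    · refine h1.trans ?_
      have h9 : volume ({x | ENNReal.ofReal l < P x} ∪ Z) ≤ volume {x | ENNReal.ofReal l < P x} := by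
        refine (measure_union_le _ _).trans ?_
        rw [hZ0, add_zero]
      gcongr
    · rw [hIe, vol_closedBall n 0 (by norm_num), hvv, ← ENNReal.ofReal_mul (by positivity),
        ← ENNReal.ofReal_mul hl0.le]
      apply ENNReal.ofReal_le_ofReal
      rw [← div_le_iff₀ (by positivity)]
      exact hb2.trans hbl
    · intro x r hr hx z hz
      by_cases hzZ : z ∈ Z
      · exact Or.inr hzZ
      · left
        have hzM : ∀ t : ℝ, 0 < t → |phiConv n φ f t z| ≤ Mphi n φ f z := by
          by_contra hcon
          exact hzZ hcon
        have h2 : k * l ≤ phiConv n φ f (4 * r) z :=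
          near_lower n hφ hφ0 ha hφa hφ1 hg hθ hu0 hgu hc hC0 hθC hv
            (by rw [← div_le_iff₀' hk0]; exact hb1.trans hbl) hl0 hr hz hx
        have h3 := (le_abs_self _).trans (hzM (4 * r) (by positivity))
        have h4 : k * l ≤ Mphi n φ f z := h2.trans h3
        change ENNReal.ofReal l < ENNReal.ofReal (2 / k) * ‖Mphi n φ f z‖ₑ
        rw [Real.enorm_eq_ofReal_abs, abs_of_nonneg ((by positivity : 0 ≤ k * l).trans h4),
          ← ENNReal.ofReal_mul (by positivity)]
        have h5 : l < 2 / k * Mphi n φ f z := by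
          have : 2 / k * (k * l) = 2 * l := by field_simp
          have h6 : 2 / k * (k * l) ≤ 2 / k * Mphi n φ f z := by gcongr
          linarith
        exact (ENNReal.ofReal_lt_ofReal_iff (hl0.trans h5)).2 h5
  set J : En n → ℝ → ℝ≥0∞ := fun y l => ENNReal.ofReal (u y) *
    (Ico b (u y)).indicator (fun l => ENNReal.ofReal l⁻¹) l with hJ
  have hJm : Measurable (Function.uncurry J) := by
    have : Function.uncurry J = fun p : En n × ℝ => ENNReal.ofReal (u p.1) *
        ({p : En n × ℝ | b ≤ p.2 ∧ p.2 < u p.1}.indicator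
          (fun p => ENNReal.ofReal (p.2)⁻¹) p) := by
      funext p
      simp [Function.uncurry, indicator, hJ]
    rw [this]
    refine Measurable.mul (by fun_prop) (Measurable.indicator (by fun_prop) ?_)
    have m1 : MeasurableSet {p : En n × ℝ | b ≤ p.2} :=
      measurableSet_le (by fun_prop) (by fun_prop)
    have m2 : MeasurableSet {p : En n × ℝ | p.2 < u p.1} :=
      measurableSet_lt (by fun_prop) (by fun_prop)
    exact m1.inter m2
  have e1 : ∫⁻ y, ENNReal.ofReal (u y) * ENNReal.ofReal (lnp (u y / b))
      = ∫⁻ y, ∫⁻ l in Ioi (0 : ℝ), J y l := by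
    refine lintegral_congr fun y => ?_
    rw [hJ]
    simp only
    rw [lintegral_const_mul' _ _ ENNReal.ofReal_ne_top, log_aux (hu0 y) hb0]
  rw [e1, lintegral_lintegral_swap hJm.aemeasurable]
  have e2 : ∫⁻ l in Ioi (0 : ℝ), ∫⁻ y, J y l
      ≤ ∫⁻ l in Ioi (0 : ℝ), ENNReal.ofReal (5 ^ n) * volume {x | ENNReal.ofReal l < P x} := by
    refine setLIntegral_mono' measurableSet_Ioi fun l hl => ?_
    have hl0 : (0 : ℝ) < l := hl
    rcases lt_or_ge l b with h | h
    · have : ∀ y, J y l = 0 := by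
        intro y
        rw [hJ]
        simp only
        rw [indicator_of_notMem (fun hmem : l ∈ Ico b (u y) => absurd hmem.1 (not_le.2 h)),
          mul_zero]
      simp [this]
    · have hmS : MeasurableSet {y | ENNReal.ofReal l < ENNReal.ofReal (u y)} :=
        measurableSet_lt measurable_const (by fun_prop)
      have h7 : ∫⁻ y, J y l = ENNReal.ofReal l⁻¹ *
          ∫⁻ y in {y | ENNReal.ofReal l < ENNReal.ofReal (u y)}, ENNReal.ofReal (u y) := by
        rw [← lintegral_indicator hmS, ← lintegral_const_mul' _ _ ENNReal.ofReal_ne_top]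
        refine lintegral_congr fun y => ?_
        rw [hJ]
        simp only
        by_cases hy : l < u y
        · rw [indicator_of_mem (show l ∈ Ico b (u y) from ⟨h, hy⟩), indicator_of_mem, mul_comm]
          exact (ENNReal.ofReal_lt_ofReal_iff (hl0.trans hy)).2 hy
        · rw [indicator_of_notMem (fun hmem : l ∈ Ico b (u y) => hy hmem.2), indicator_of_notMem]
          · simp
          · exact not_lt.2 (ENNReal.ofReal_le_ofReal (not_lt.1 hy))
      rw [h7]
      refine (mul_le_mul_right (key l h) _).trans ?_
      apply le_of_eq
      have : ENNReal.ofReal l⁻¹ * ENNReal.ofReal l = 1 := by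
        rw [← ENNReal.ofReal_mul (by positivity), inv_mul_cancel₀ hl0.ne', ENNReal.ofReal_one]
      calc _ = (ENNReal.ofReal l⁻¹ * ENNReal.ofReal l) *
            (ENNReal.ofReal (5 ^ n) * volume {x | ENNReal.ofReal l < P x}) := by ring
        _ = _ := by rw [this, one_mul]
  refine e2.trans_lt ?_
  rw [lintegral_const_mul' _ _ ENNReal.ofReal_ne_top, ← layer_cake volume hPm, hP,
    lintegral_const_mul' _ _ ENNReal.ofReal_ne_top]
  exact ENNReal.mul_lt_top ENNReal.ofReal_lt_top (ENNReal.mul_lt_top ENNReal.ofReal_lt_top hM)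

lemma part_two (n : ℕ) (hn : 1 ≤ n) (θ : En n → ℝ)
    (hθ0 : ∀ x, 0 ≤ θ x) (hθbdd : ∃ C, ∀ x, |θ x| ≤ C)
    (hθsupp : ∀ x, x ∉ unitQ n → θ x = 0) (hθint : (∫ x, θ x) = 1)
    (S : Set (En n → ℝ)) (hS1 : ∀ f ∈ S, Integrable f)
    (hS2 : ∀ f ∈ S, ∀ g ∈ S, f + g ∈ S) (hS3 : θ ∈ S)
    (hS4 : ∀ f : En n → ℝ, Integrable f → (∫ x, f x) = 0 →
          (∃ g ∈ S, ∀ᵐ x ∂(volume : Measure (En n)), |f x| ≤ |g x|) → MemH1 n f)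
    (g : En n → ℝ) (hgS : g ∈ S) (hg0 : ∀ x, 0 ≤ g x) :
    ∫⁻ x, ENNReal.ofReal (g x * (1 + lnp (g x) + lnp ‖x‖)) < ⊤ := by
  obtain ⟨C, hC⟩ := hθbdd
  have hC0 : 0 ≤ C := (abs_nonneg _).trans (hC 0)
  have hg := hS1 g hgS
  have hθ := hS1 θ hS3
  set c : ℝ := ∫ x, g x with hcdef
  have hc : 0 ≤ c := integral_nonneg hg0
  set f : En n → ℝ := fun y => g y - c * θ y with hfdef
  have hf : Integrable f := hg.sub (hθ.const_mul c)
  have hf0 : ∫ x, f x = 0 := by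
    rw [hfdef, integral_sub hg (hθ.const_mul c), integral_const_mul, hθint]
    simp [hcdef]
  have hmem : ∀ m : ℕ, (fun y => g y + m * θ y) ∈ S := by
    intro m
    induction m with
    | zero => simpa using hgS
    | succ m ih =>
      have := hS2 _ ih _ hS3
      convert this using 1
      funext y
      simp only [Pi.add_apply]
      push_cast
      ring
  have hH : MemH1 n f := by
    refine hS4 f hf hf0 ⟨_, hmem ⌈c⌉₊, Eventually.of_forall fun y => ?_⟩
    have h1 : c ≤ ⌈c⌉₊ := Nat.le_ceil c
    have h2 : c * θ y ≤ ⌈c⌉₊ * θ y := mul_le_mul_of_nonneg_right h1 (hθ0 y)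
    have h3 := mul_nonneg hc (hθ0 y)
    have h4 := hg0 y
    simp only [hfdef]
    rw [abs_le]
    have h5 := le_abs_self (g y + ⌈c⌉₊ * θ y)
    constructor <;> linarith
  obtain ⟨φ, a, hφ, hφ0, ha, hφa, hφ1⟩ := exists_bump n
  have hM : ∫⁻ x, ‖Mphi n φ f x‖ₑ < ⊤ := (hH φ hφ).2
  set u : En n → ℝ := fun y => |hg.1.mk g y| with hudef
  have hum : Measurable u := by
    have := hg.1.stronglyMeasurable_mk.measurable
    fun_prop
  have hu0 : ∀ x, 0 ≤ u x := fun x => abs_nonneg _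
  have hgu : ∀ᵐ y, u y = g y := by
    filter_upwards [hg.1.ae_eq_mk] with y hy
    rw [hudef]
    simp only
    rw [← hy, abs_of_nonneg (hg0 y)]
  have hufin : ∫⁻ y, ENNReal.ofReal (u y) ≠ ⊤ := by
    have : ∫⁻ y, ENNReal.ofReal (u y) = ∫⁻ y, ‖g y‖ₑ := by
      apply lintegral_congr_ae
      filter_upwards [hgu] with y hy
      rw [hy, Real.enorm_eq_ofReal_abs, abs_of_nonneg (hg0 y)]
    rw [this]
    exact hg.2.ne
  have hn0 : (0 : ℝ) < n := by exact_mod_cast hn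
  have hfu : ∀ᵐ y, (n : ℝ) < ‖y‖ → f y = u y := by
    filter_upwards [hgu] with y hy hyn
    have : θ y = 0 := hθsupp y fun hmem => absurd (unitQ_norm n hn hmem) (not_lt.2 hyn.le)
    rw [hy, hfdef]
    simp [this]
  have hfar := far_part n hn hφ ha hφa hφ1 hf hf0 hum hu0 hn0 hfu hM
  obtain ⟨b, hb0, hnear⟩ := near_part n hn hφ hφ0 ha hφa hφ1 hg hθ hum hu0 hgu hc hC0 hC hufin hM
  set K : ℝ := 1 + lnp b + lnp (5 * n) with hK
  have hK0 : 0 ≤ K := by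
    have := lnp_nonneg b
    have := lnp_nonneg (5 * n)
    positivity
  have hm1 : Measurable fun y => ENNReal.ofReal (u y) * ENNReal.ofReal (lnp (u y / b)) := by
    have := lnp_measurable
    fun_prop
  have hm2 : Measurable fun y => ENNReal.ofReal K * ENNReal.ofReal (u y) := by fun_prop
  have hle : ∀ᵐ y, ENNReal.ofReal (g y * (1 + lnp (g y) + lnp ‖y‖)) ≤
      ENNReal.ofReal K * ENNReal.ofReal (u y) +
      (ENNReal.ofReal (u y) * ENNReal.ofReal (lnp (u y / b)) +
      ENNReal.ofReal (u y) * ENNReal.ofReal (lnp (‖y‖ / 5 / n))) := by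
    filter_upwards [hgu] with y hy
    have q0 := hu0 y
    have q1 := lnp_nonneg (u y / b)
    have q2 := lnp_nonneg (‖y‖ / 5 / n)
    rw [← hy, ← ENNReal.ofReal_mul hK0, ← ENNReal.ofReal_mul q0, ← ENNReal.ofReal_mul q0,
      ← ENNReal.ofReal_add (by positivity) (by positivity),
      ← ENNReal.ofReal_add (by positivity) (by positivity)]
    apply ENNReal.ofReal_le_ofReal
    have h1 : lnp (u y) ≤ lnp (u y / b) + lnp b := by
      have := lnp_mul_le (a := u y / b) (b := b) (by positivity) hb0.le
      rwa [div_mul_cancel₀ _ hb0.ne'] at this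
    have h2 : lnp ‖y‖ ≤ lnp (‖y‖ / 5 / n) + lnp (5 * n) := by
      have := lnp_mul_le (a := ‖y‖ / 5 / n) (b := 5 * n) (by positivity) (by positivity)
      have e : ‖y‖ / 5 / n * (5 * n) = ‖y‖ := by field_simp
      rwa [e] at this
    have h3 : 1 + lnp (u y) + lnp ‖y‖ ≤ K + lnp (u y / b) + lnp (‖y‖ / 5 / n) := by
      rw [hK]; linarith
    have h4 := mul_le_mul_of_nonneg_left h3 q0
    linarith
  refine (lintegral_mono_ae hle).trans_lt ?_
  rw [lintegral_add_left hm2, lintegral_add_left hm1,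
    lintegral_const_mul' _ _ ENNReal.ofReal_ne_top]
  exact ENNReal.add_lt_top.2 ⟨ENNReal.mul_lt_top ENNReal.ofReal_lt_top hufin.lt_top,
    ENNReal.add_lt_top.2 ⟨hnear, hfar⟩⟩

/-- **Corollary (maximality of the `L log L`-type condition).**
(i) If `g` is integrable with `∫ |g(x)|(1 + ln₊|g(x)| + ln₊|x|) dx < ∞`, and `f` is
integrable with `|f| ≤ |g|` a.e. and `∫ f = 0`, then `f ∈ H^1(ℝ^n)`.
(ii) Conversely, if `S` is a set of integrable functions closed under addition,
containing `θ`, such that every integrable `f` with zero integral dominated by some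
member of `S` lies in `H^1(ℝ^n)`, then every nonnegative `g ∈ S` satisfies
`∫ g(x)(1 + ln₊ g(x) + ln₊|x|) dx < ∞`. -/
theorem global_stein_corollary (n : ℕ) (hn : 1 ≤ n) (θ : En n → ℝ)
    (hθmeas : Measurable θ) (hθ0 : ∀ x, 0 ≤ θ x) (hθbdd : ∃ C, ∀ x, |θ x| ≤ C)
    (hθsupp : ∀ x, x ∉ unitQ n → θ x = 0) (hθint : (∫ x, θ x) = 1) :
    (∀ g f : En n → ℝ, Integrable g →
        ∫⁻ x, ENNReal.ofReal (|g x| * (1 + lnp |g x| + lnp ‖x‖)) < ⊤ →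
        Integrable f → (∀ᵐ x ∂(volume : Measure (En n)), |f x| ≤ |g x|) →
        (∫ x, f x) = 0 → MemH1 n f) ∧
    (∀ S : Set (En n → ℝ),
        (∀ f ∈ S, Integrable f) →
        (∀ f ∈ S, ∀ g ∈ S, f + g ∈ S) →
        θ ∈ S →
        (∀ f : En n → ℝ, Integrable f → (∫ x, f x) = 0 →
          (∃ g ∈ S, ∀ᵐ x ∂(volume : Measure (En n)), |f x| ≤ |g x|) → MemH1 n f) →
        ∀ g ∈ S, (∀ x, 0 ≤ g x) →
          ∫⁻ x, ENNReal.ofReal (g x * (1 + lnp (g x) + lnp ‖x‖)) < ⊤) := by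
  exact ⟨fun g f _ hglog hf hfg hf0 => part_one n hn g f hglog hf hfg hf0,
    fun S hS1 hS2 hS3 hS4 g hgS hg0 =>
      part_two n hn θ hθ0 hθbdd hθsupp hθint S hS1 hS2 hS3 hS4 g hgS hg0⟩
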